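/- For every integer s ≥ 1, the dimension over F_2 of the subspace of GL_4(F_2)-invariants of Q_n in degree n = 3(2^s − 1) + 3·2^s = 6·2^s − 3 (equivalently, the dimension of the coinvariant space F_2 ⊗_{GL_4} P((P_4)_n^*), the domain of Singer's fourth algebraic transfer) equals 0 if s = 2 and equals 1 if s ≠ 2. -/

import Mathlib

/-!
Common setup: the polynomial algebra `P_4 = F_2[x_1,x_2,x_3,x_4]` (variables `X 0, ..., X 3`),
the Steenrod action, hit polynomials, the cohit spaces `Q_n`, and the (induced) actions of
`GL_4(F_2)` and of the symmetric group `Σ_4` on `Q_n`.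
-/

open MvPolynomial

noncomputable section

abbrev kk : Type := ZMod 2
abbrev P4 : Type := MvPolynomial (Fin 4) kk

/-- The total Steenrod square: the algebra endomorphism of `P4` with `X i ↦ X i + (X i)^2`.
For `g` homogeneous of degree `d`, `Sq^t g` is the degree-`d+t` homogeneous component
of `sqTotal g`. -/
def sqTotal : P4 →ₐ[kk] P4 := aeval fun i => X i + X i ^ 2

/-- The homogeneous polynomials of degree `n`, i.e. `(P_4)_n`, as a submodule. -/
def homog (n : ℕ) : Submodule kk P4 := homogeneousSubmodule (Fin 4) kk n

/-- The subspace `H_n` of hit polynomials of degree `n`: it is spanned by the elements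
`Sq^{n-d}(g) = (sqTotal g)_n` for `g` homogeneous of degree `d < n`, i.e. by all
`∑_{t>0} Sq^t(f_t)` with `f_t ∈ (P_4)_{n-t}`. -/
def hitSub (n : ℕ) : Submodule kk P4 :=
  Submodule.span kk
    {p | ∃ d, d < n ∧ ∃ g ∈ homog d, p = homogeneousComponent n (sqTotal g)}

/-- The cohit space `Q_n = (P_4)_n / H_n`. -/
abbrev Qn (n : ℕ) :=
  ↥(homog n) ⧸ ((hitSub n).comap (homog n).subtype)

/-- Projection of a polynomial onto its degree-`n` part, landing in `homog n`. -/
def toHomog (n : ℕ) : P4 →ₗ[kk] homog n :=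
  (homogeneousComponent n).codRestrict (homog n) fun f => homogeneousComponent_mem n f

/-- The class in `Q_n` of (the degree-`n` component of) a polynomial.  For `f`
homogeneous of degree `n` this is the class `[f]` of `f`. -/
def Qmk (n : ℕ) : P4 →ₗ[kk] Qn n :=
  ((hitSub n).comap (homog n).subtype).mkQ.comp (toHomog n)

/-- Substitution action of a matrix `M`: the algebra endomorphism `X i ↦ ∑ j M i j • X j`. -/
def substM (M : Matrix (Fin 4) (Fin 4) kk) : P4 →ₐ[kk] P4 :=
  aeval fun i => ∑ j, M i j • X j

/-- The set of invertible `4 × 4` matrices over `F_2`, i.e. `GL_4(F_2)`. -/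
def glSet : Set (Matrix (Fin 4) (Fin 4) kk) := {M | IsUnit M}

/-- The set of permutation matrices, i.e. `Σ_4 ⊆ GL_4(F_2)`. -/
def permSet : Set (Matrix (Fin 4) (Fin 4) kk) :=
  {M | ∃ σ : Equiv.Perm (Fin 4), M = σ.toPEquiv.toMatrix}

/-- Homogeneous polynomials of degree `n` whose class in `Q_n` is invariant under every
element of `G` (the action on classes being induced by `substM`): for every `M ∈ G`,
`M·f - f` is hit. -/
def invPre (n : ℕ) (G : Set (Matrix (Fin 4) (Fin 4) kk)) : Submodule kk P4 :=
  homog n ⊓ ⨅ M ∈ G, (hitSub n).comap ((substM M).toLinearMap - LinearMap.id)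

/-- The subspace `(Q_n)^G` of `G`-invariant classes in `Q_n`. -/
def QInv (n : ℕ) (G : Set (Matrix (Fin 4) (Fin 4) kk)) : Submodule kk (Qn n) :=
  (invPre n G).map (Qmk n)

/-- The `Σ_4`-submodule of `Q_n` generated by the classes of the polynomials in `S`:
the span of the classes of all the permuted polynomials `σ · f`, `σ ∈ Σ_4`, `f ∈ S`. -/
def permSpan (n : ℕ) (S : Set P4) : Submodule kk (Qn n) :=
  Submodule.span kk
    {c | ∃ σ : Equiv.Perm (Fin 4), ∃ f ∈ S, c = Qmk n (rename (⇑σ) f)}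

/-!
In degree `kamekoDegree s` every class is, modulo hit polynomials, a sum of iterated Kameko lifts of
cubic monomials, and such a lift only depends on the set `S` of directions of the lifts and on the
set `T` of variables of the monomial. Reading it as the function `l ^ S * p ^ T` defines a
`GL_4`-equivariant map from `Q_n` to the functions on pairs of a point `p` and a plane `l` through
it, for which standard monomials give a basis.

For `3 ≤ s` this map is an isomorphism, and since `GL_4` acts transitively on these pairs, the
invariants are the constants. For `s ≤ 2` the functions in the image sum to zero over the 105 pairs,
so no nonzero constant is among them and the invariants lie in the kernel. For `s = 1` the kernel is
spanned by one nonzero class, which is therefore invariant. For `s = 2` it is spanned by the four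
lifts of that class, and the transvection `X a ↦ X a + X b` adds the `a`-th lift to the `b`-th, so
no nonzero combination of them is invariant.
-/

theorem kk_eq_zero_or_eq_one (c : kk) : c = 0 ∨ c = 1 := by decide +revert

theorem kk_mul_self (c : kk) : c * c = c := by decide +revert

section HomogeneousComponents

variable {σ R : Type*} [CommSemiring R]

attribute [local instance] MvPolynomial.gradedAlgebra in
theorem homogeneousComponent_mul_of_isHomogeneous {a : MvPolynomial σ R} {k : ℕ}
    (ha : a.IsHomogeneous k) (n : ℕ) (b : MvPolynomial σ R) :
    homogeneousComponent n (a * b) =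
      if k ≤ n then a * homogeneousComponent (n - k) b else 0 := by
  simp only [← decomposition.decompose'_apply]
  exact DirectSum.coe_decompose_mul_of_left_mem (homogeneousSubmodule σ R) n ha

theorem homogeneousComponent_sq [CharP R 2] (n : ℕ) (f : MvPolynomial σ R) :
    homogeneousComponent n (f ^ 2) =
      if Even n then homogeneousComponent (n / 2) f ^ 2 else 0 := by
  have hcomp (i : ℕ) : homogeneousComponent n (homogeneousComponent i f ^ 2) =
      if n = i * 2 then homogeneousComponent i f ^ 2 else 0 :=
    homogeneousComponent_of_mem ((homogeneousComponent_isHomogeneous i f).pow 2)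
  obtain ⟨N, hN, hf⟩ : ∃ N, n < N ∧ ∑ i ∈ Finset.range N, homogeneousComponent i f = f := by
    refine ⟨f.totalDegree + 1 + n, by omega, ?_⟩
    rw [Finset.sum_range_add, sum_homogeneousComponent, Finset.sum_eq_zero, add_zero]
    exact fun i _ => homogeneousComponent_eq_zero _ _ (by omega)
  conv_lhs => rw [← hf, CharTwo.sum_sq, map_sum]
  simp only [hcomp]
  split_ifs with hn
  · obtain ⟨m, rfl⟩ := hn
    have hm : (m + m) / 2 = m := by omega
    rw [hm, Finset.sum_eq_single_of_mem m (Finset.mem_range.2 (by omega)), if_pos (by omega)]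
    exact fun i _ hi => if_neg (by omega)
  · exact Finset.sum_eq_zero fun i _ => if_neg fun h => hn ⟨i, by omega⟩

variable [CharP R 2] {a b : MvPolynomial σ R} {k n e : ℕ}

theorem homogeneousComponent_mul_sq (ha : a.IsHomogeneous k) (h : n = k + 2 * e) :
    homogeneousComponent n (a * b ^ 2) = a * homogeneousComponent e b ^ 2 := by
  subst h
  rw [homogeneousComponent_mul_of_isHomogeneous ha, if_pos (by omega), homogeneousComponent_sq,
    if_pos ⟨e, by omega⟩, show (k + 2 * e - k) / 2 = e by omega]

theorem homogeneousComponent_mul_sq_eq_zero (ha : a.IsHomogeneous k)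
    (h : ∀ e, n = k + 2 * e → homogeneousComponent e b = 0) :
    homogeneousComponent n (a * b ^ 2) = 0 := by
  by_cases he : ∃ e, n = k + 2 * e
  · obtain ⟨e, he⟩ := he
    rw [homogeneousComponent_mul_sq ha he, h e he, zero_pow two_ne_zero, mul_zero]
  · rw [homogeneousComponent_mul_of_isHomogeneous ha, homogeneousComponent_sq, ite_eq_right_iff]
    intro hkn
    rw [if_neg, mul_zero]
    rintro ⟨e, h2⟩
    exact he ⟨e, by omega⟩

end HomogeneousComponents

section Steenrod

theorem homog_induction {p : ∀ n f, f ∈ homog n → Prop}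
    (one : p 0 1 (isHomogeneous_one _ _)) (zero : ∀ n, p n 0 (zero_mem _))
    (add : ∀ n f g hf hg, p n f hf → p n g hg → p n (f + g) (add_mem hf hg))
    (mul : ∀ n l (hl : l ∈ homog 1) f (hf : f ∈ homog n), p n f hf →
      p (n + 1) (l * f) (add_comm 1 n ▸ IsHomogeneous.mul hl hf))
    {n : ℕ} {f : P4} (hf : f ∈ homog n) : p n f hf := by
  suffices h : ∃ h, p n f h from h.2
  rw [homog, ← homogeneousSubmodule_one_pow] at hf
  induction hf using Submodule.pow_induction_on_left' with
  | algebraMap r =>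
    obtain rfl | rfl := kk_eq_zero_or_eq_one r
    · exact ⟨by simp, by simpa only [map_zero] using zero 0⟩
    · exact ⟨by rw [map_one]; exact isHomogeneous_one _ _, by simpa only [map_one] using one⟩
  | add f g n _ _ ihf ihg => exact ⟨_, add n f g _ _ ihf.2 ihg.2⟩
  | mem_mul l hl n f _ ih => exact ⟨_, mul n l hl f _ ih.2⟩

theorem sqTotal_linear {l : P4} (hl : l ∈ homog 1) : sqTotal l = l + l ^ 2 := by
  rw [homog, homogeneousSubmodule_one_eq_span_X] at hl
  induction hl using Submodule.span_induction with
  | mem _ hx => obtain ⟨i, rfl⟩ := hx; exact aeval_X _ i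
  | zero => simp only [map_zero, zero_pow two_ne_zero, add_zero]
  | add f g _ _ hf hg => rw [map_add, hf, hg, CharTwo.add_sq, add_add_add_comm]
  | smul c f _ hf =>
    obtain rfl | rfl := kk_eq_zero_or_eq_one c
    · simp only [zero_smul, map_zero, zero_pow two_ne_zero, add_zero]
    · simpa only [one_smul] using hf

variable {d n : ℕ} {g : P4}

theorem homogeneousComponent_sqTotal_linear_mul {l : P4} (hl : l ∈ homog 1) (f : P4) (n : ℕ) :
    homogeneousComponent (n + 1) (sqTotal (l * f)) =
      l * homogeneousComponent n (sqTotal f) +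
      if 1 ≤ n then l ^ 2 * homogeneousComponent (n - 1) (sqTotal f) else 0 := by
  have hl2 : (l ^ 2).IsHomogeneous 2 := IsHomogeneous.pow hl 2
  rw [map_mul, sqTotal_linear hl, add_mul, map_add,
    homogeneousComponent_mul_of_isHomogeneous hl, homogeneousComponent_mul_of_isHomogeneous hl2,
    if_pos (by omega), Nat.add_sub_cancel]
  simp only [Nat.succ_le_succ_iff, show n + 1 - 2 = n - 1 by omega]

theorem homogeneousComponent_sqTotal_of_lt (hg : g ∈ homog d) (h : n < d) :
    homogeneousComponent n (sqTotal g) = 0 := by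
  induction hg using homog_induction generalizing n with
  | one => omega
  | zero => simp only [map_zero]
  | add d f g _ _ hf hg => rw [map_add, map_add, hf h, hg h, add_zero]
  | mul d l hl f _ ih =>
    cases n with
    | zero =>
      rw [map_mul, sqTotal_linear hl, sq, add_mul, mul_assoc, ← mul_add,
        homogeneousComponent_mul_of_isHomogeneous hl, if_neg (by omega)]
    | succ n =>
      rw [homogeneousComponent_sqTotal_linear_mul hl, ih (by omega), ih (by omega), mul_zero,
        mul_zero, ite_self, add_zero]

theorem homogeneousComponent_sqTotal_self (hg : g ∈ homog d) :
    homogeneousComponent d (sqTotal g) = g := by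
  induction hg using homog_induction with
  | one => rw [map_one]; exact homogeneousComponent_eq_self (isHomogeneous_one _ _)
  | zero => simp only [map_zero]
  | add d f g _ _ hf hg => rw [map_add, map_add, hf, hg]
  | mul d l hl f hf ih =>
    rw [homogeneousComponent_sqTotal_linear_mul hl, ih, add_eq_left, ite_eq_right_iff]
    intro hd
    rw [homogeneousComponent_sqTotal_of_lt hf (by omega), mul_zero]

theorem homogeneousComponent_sqTotal_of_two_mul_lt (hg : g ∈ homog d) (h : 2 * d < n) :
    homogeneousComponent n (sqTotal g) = 0 := by
  induction hg using homog_induction generalizing n with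
  | one =>
    rw [map_one, homogeneousComponent_of_mem (isHomogeneous_one _ _), if_neg (by omega)]
  | zero => simp only [map_zero]
  | add d f g _ _ hf hg => rw [map_add, map_add, hf h, hg h, add_zero]
  | mul d l hl f _ ih =>
    obtain ⟨n, rfl⟩ : ∃ m, n = m + 1 := ⟨n - 1, by omega⟩
    rw [homogeneousComponent_sqTotal_linear_mul hl, ih (by omega), ih (by omega), mul_zero,
      mul_zero, ite_self, add_zero]

theorem homogeneousComponent_sqTotal_two_mul (hg : g ∈ homog d) :
    homogeneousComponent (2 * d) (sqTotal g) = g ^ 2 := by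
  induction hg using homog_induction with
  | one => rw [map_one, one_pow]; exact homogeneousComponent_eq_self (isHomogeneous_one _ _)
  | zero => simp only [map_zero, zero_pow two_ne_zero]
  | add d f g _ _ hf hg => rw [map_add, map_add, hf, hg, CharTwo.add_sq]
  | mul d l hl f hf ih =>
    rw [Nat.mul_succ, homogeneousComponent_sqTotal_linear_mul hl, if_pos (by omega),
      homogeneousComponent_sqTotal_of_two_mul_lt hf (by omega), mul_zero, zero_add,
      Nat.add_sub_cancel, ih, mul_pow]

end Steenrod

section Hits

variable {d m n : ℕ} {g : P4}

theorem homogeneousComponent_sqTotal_mem_hitSub (h : d < n) (hg : g ∈ homog d) :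
    homogeneousComponent n (sqTotal g) ∈ hitSub n :=
  Submodule.subset_span ⟨d, h, g, hg, rfl⟩

theorem hitSub_le_iff {S : Submodule kk P4} :
    hitSub n ≤ S ↔ ∀ d < n, ∀ g ∈ homog d, homogeneousComponent n (sqTotal g) ∈ S := by
  refine Submodule.span_le.trans ⟨fun h d hd g hg => h ⟨d, hd, g, hg, rfl⟩, ?_⟩
  rintro h _ ⟨d, hd, g, hg, rfl⟩
  exact h d hd g hg

theorem sum_sqTotal_X_pow_mul (i : Fin 4) (g : P4) (N : ℕ) :
    ∑ j ∈ Finset.range N, sqTotal (X i ^ 2 ^ j * g) = (X i + X i ^ 2 ^ N) * sqTotal g := by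
  have hX (j : ℕ) : sqTotal (X i ^ 2 ^ j) = X i ^ 2 ^ j + X i ^ 2 ^ (j + 1) := by
    rw [map_pow, sqTotal_linear (isHomogeneous_X _ i), add_pow_char_pow, ← pow_mul, pow_succ' 2 j]
  have hsum : ∑ j ∈ Finset.range N, (X i ^ 2 ^ j + X i ^ 2 ^ (j + 1) : P4) =
      X i + X i ^ 2 ^ N := by
    have htel := Finset.sum_range_sub' (fun j => (X i ^ 2 ^ j : P4)) N
    simp_rw [CharTwo.sub_eq_add] at htel
    rw [htel, pow_zero, pow_one]
  rw [← hsum, Finset.sum_mul]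
  exact Finset.sum_congr rfl fun j _ => by rw [map_mul, hX]

theorem X_mul_sq_mem_hitSub (hd : 0 < d) (he : Even d) (i : Fin 4) (hg : g ∈ homog d) :
    X i * g ^ 2 ∈ hitSub (2 * d + 1) := by
  have hX (j : ℕ) : (X i ^ 2 ^ j : P4) ∈ homog (2 ^ j) := isHomogeneous_X_pow i _
  have hN : 2 * d + 1 < 2 ^ (2 * d + 1) := Nat.lt_two_pow_self
  have htop : homogeneousComponent (2 * d + 1)
      ((X i + X i ^ 2 ^ (2 * d + 1)) * sqTotal g) = X i * g ^ 2 := by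
    rw [add_mul, map_add, homogeneousComponent_mul_of_isHomogeneous (isHomogeneous_X _ i),
      homogeneousComponent_mul_of_isHomogeneous (hX _), if_pos (by omega), if_neg (by omega),
      add_zero, Nat.add_sub_cancel, homogeneousComponent_sqTotal_two_mul hg]
  rw [← htop, ← sum_sqTotal_X_pow_mul, map_sum]
  refine Submodule.sum_mem _ fun j _ => ?_
  have hXg : X i ^ 2 ^ j * g ∈ homog (2 ^ j + d) := IsHomogeneous.mul (hX j) hg
  rcases lt_trichotomy (2 ^ j + d) (2 * d + 1) with hlt | heq | hgt
  · exact homogeneousComponent_sqTotal_mem_hitSub hlt hXg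
  · obtain rfl | hj := Nat.eq_zero_or_pos j
    · omega
    · have : Even (2 ^ j) := (Nat.even_pow.2 ⟨even_two, hj.ne'⟩)
      grind
  · rw [homogeneousComponent_sqTotal_of_lt hXg hgt]
    exact zero_mem _

/-- The squarefree monomial with support `u`. -/
def varProd (u : Finset (Fin 4)) : P4 := ∏ i ∈ u, X i

theorem varProd_mem_homog (u : Finset (Fin 4)) : varProd u ∈ homog u.card := by
  rw [Finset.card_eq_sum_ones]
  exact IsHomogeneous.prod u _ _ fun i _ => isHomogeneous_X _ i

theorem varProd_insert {i : Fin 4} {u : Finset (Fin 4)} (h : i ∉ u) :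
    varProd (insert i u) = X i * varProd u := Finset.prod_insert h

theorem varProd_singleton (i : Fin 4) : varProd {i} = X i := Finset.prod_singleton _ _

theorem varProd_mul_of_subset {u v : Finset (Fin 4)} (h : u ⊆ v) :
    varProd v * varProd u = varProd (v \ u) * varProd u ^ 2 := by
  rw [varProd, ← Finset.prod_sdiff h, sq, ← mul_assoc]
  rfl

theorem sqTotal_varProd_mul_sq (v : Finset (Fin 4)) (g : P4) :
    sqTotal (varProd v * g ^ 2) =
      ∑ u ∈ v.powerset, varProd v * varProd u * sqTotal g ^ 2 := by
  have hX (i : Fin 4) : sqTotal (X i) = X i * (1 + X i) := by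
    rw [sqTotal_linear (isHomogeneous_X _ i)]; ring
  simp only [map_mul, map_pow, varProd, map_prod, hX, Finset.prod_mul_distrib,
    Finset.prod_one_add, Finset.mul_sum, Finset.sum_mul]

theorem varProd_mul_varProd_mem_homog (u v : Finset (Fin 4)) :
    varProd v * varProd u ∈ homog (v.card + u.card) :=
  IsHomogeneous.mul (varProd_mem_homog v) (varProd_mem_homog u)

theorem homogeneousComponent_varProd_mul_sq_mem_hitSub {u v : Finset (Fin 4)} (hv : v.card = 3)
    (huv : u ⊆ v) (hu : u.Nonempty) (hm : Odd m) (f : P4) :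
    homogeneousComponent (2 * m + 3) (varProd v * varProd u * f ^ 2) ∈ hitSub (2 * m + 3) := by
  have hu1 : 1 ≤ u.card := hu.card_pos
  have hu3 : u.card ≤ 3 := hv ▸ Finset.card_le_card huv
  by_cases hu2 : u.card = 2
  · obtain ⟨k, hk⟩ : ∃ k, v \ u = {k} :=
      Finset.card_eq_one.1 (by rw [Finset.card_sdiff_of_subset huv, hv, hu2])
    rw [homogeneousComponent_mul_sq (e := m - 1) (varProd_mul_varProd_mem_homog u v) (by grind),
      varProd_mul_of_subset huv, hk, varProd_singleton, mul_assoc, ← mul_pow]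
    have hhit := X_mul_sq_mem_hitSub (d := 2 + (m - 1)) (by omega) (by grind) k
      (IsHomogeneous.mul (hu2 ▸ varProd_mem_homog u)
        (homogeneousComponent_isHomogeneous (m - 1) f))
    rwa [show 2 * (2 + (m - 1)) + 1 = 2 * m + 3 by grind] at hhit
  · rw [homogeneousComponent_mul_sq_eq_zero (varProd_mul_varProd_mem_homog u v) (by grind)]
    exact zero_mem _

theorem varProd_mul_sq_mem_hitSub {v : Finset (Fin 4)} (hv : v.card = 3) (hm : Odd m)
    (hg : g ∈ hitSub m) : varProd v * g ^ 2 ∈ hitSub (2 * m + 3) := by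
  induction hg using Submodule.span_induction with
  | zero => simp only [zero_pow two_ne_zero, mul_zero, zero_mem]
  | add f g _ _ hf hg => rw [CharTwo.add_sq, mul_add]; exact add_mem hf hg
  | smul c f _ hf =>
    rw [smul_pow, mul_smul_comm]
    exact Submodule.smul_mem _ _ hf
  | mem _ hx =>
    obtain ⟨d, hd, g, hg, rfl⟩ := hx
    have hsq : homogeneousComponent (2 * m + 3) (sqTotal (varProd v * g ^ 2)) ∈
        hitSub (2 * m + 3) := homogeneousComponent_sqTotal_mem_hitSub (by omega)
      (IsHomogeneous.mul (varProd_mem_homog v) (IsHomogeneous.pow hg 2))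
    rw [sqTotal_varProd_mul_sq, map_sum,
      ← Finset.add_sum_erase _ _ (Finset.empty_mem_powerset v)] at hsq
    rw [← homogeneousComponent_mul_sq (n := 2 * m + 3) (varProd_mem_homog v) (by omega)]
    convert (Submodule.add_mem_iff_left _ (Submodule.sum_mem _ fun u hu => ?_)).1 hsq using 3
    · exact (mul_one _).symm
    · obtain ⟨hu0, huv⟩ := Finset.mem_erase.1 hu
      exact homogeneousComponent_varProd_mul_sq_mem_hitSub hv (Finset.mem_powerset.1 huv)
        (Finset.nonempty_iff_ne_empty.2 hu0) hm _

theorem sum_varProd_compl_mul_sq_mem_hitSub (hm : Odd m) (hg : g ∈ homog (m - 1)) :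
    ∑ i, varProd {i}ᶜ * (X i * g) ^ 2 ∈ hitSub (2 * m + 3) := by
  have hm0 := hm.pos
  have hsq : homogeneousComponent (2 * m + 3) (sqTotal (varProd Finset.univ * g ^ 2)) ∈
      hitSub (2 * m + 3) := homogeneousComponent_sqTotal_mem_hitSub (d := 4 + (m - 1) * 2)
    (by omega) (IsHomogeneous.mul (varProd_mem_homog _) (IsHomogeneous.pow hg 2))
  have hdeg (u : Finset (Fin 4)) :
      varProd Finset.univ * varProd u ∈ homog (4 + u.card) :=
    varProd_mul_varProd_mem_homog u Finset.univ
  rw [sqTotal_varProd_mul_sq, map_sum, Finset.powerset_univ,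
    ← Finset.sum_subset (Finset.subset_univ (Finset.powersetCard 1 Finset.univ)),
    Finset.powersetCard_one, Finset.sum_map] at hsq
  · convert hsq using 2 with i
    change _ = homogeneousComponent (2 * m + 3)
      (varProd Finset.univ * varProd {i} * sqTotal g ^ 2)
    rw [homogeneousComponent_mul_sq (e := m - 1) (hdeg {i}) (by rw [Finset.card_singleton]; omega),
      varProd_mul_of_subset (Finset.subset_univ _), homogeneousComponent_sqTotal_self hg,
      varProd_singleton, mul_assoc, mul_pow, Finset.compl_eq_univ_sdiff]
  · intro u _ hu
    have hu1 : u.card ≠ 1 := fun h => hu (Finset.mem_powersetCard.2 ⟨Finset.subset_univ _, h⟩)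
    have hu4 : u.card ≤ 4 := Finset.card_le_univ u
    refine homogeneousComponent_mul_sq_eq_zero (hdeg u) fun e he =>
      homogeneousComponent_sqTotal_of_lt hg ?_
    grind

end Hits

section KamekoLift

/-- The degrees `3 (2 ^ s - 1) + 3 * 2 ^ s`, given by the recursion `d ↦ 2 d + 3` that the Kameko
lifts follow. -/
def kamekoDegree : ℕ → ℕ
  | 0 => 3
  | s + 1 => 2 * kamekoDegree s + 3

theorem odd_kamekoDegree (s : ℕ) : Odd (kamekoDegree s) := by
  cases s with
  | zero => decide
  | succ s => exact ⟨kamekoDegree s + 1, by rw [kamekoDegree]; ring⟩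

theorem three_le_kamekoDegree (s : ℕ) : 3 ≤ kamekoDegree s := by
  cases s with
  | zero => exact le_rfl
  | succ s => exact Nat.le_add_left _ _

theorem kamekoDegree_eq (s : ℕ) : kamekoDegree s = 3 * (2 ^ s - 1) + 3 * 2 ^ s := by
  induction s with
  | zero => rfl
  | succ s ih =>
    have := Nat.one_le_two_pow (n := s)
    rw [kamekoDegree, ih, pow_succ]
    omega

/-- The map `g ↦ (∏ j ≠ i, X j) g ^ 2`, a section of Kameko's halving operation that raises the
degree from `kamekoDegree s` to `kamekoDegree (s + 1)`. -/
def kamekoLift (i : Fin 4) : P4 →ₗ[kk] P4 where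
  toFun g := varProd {i}ᶜ * g ^ 2
  map_add' f g := by rw [CharTwo.add_sq, mul_add]
  map_smul' c g := by
    rw [smul_pow, sq c, kk_mul_self, mul_smul_comm, RingHom.id_apply]

theorem kamekoLift_apply (i : Fin 4) (g : P4) : kamekoLift i g = varProd {i}ᶜ * g ^ 2 := rfl

theorem card_compl_singleton (i : Fin 4) : ({i}ᶜ : Finset (Fin 4)).card = 3 := by
  rw [Finset.card_compl, Finset.card_singleton, Fintype.card_fin]

variable {s : ℕ} {g : P4}

theorem kamekoLift_mem_homog (i : Fin 4) (hg : g ∈ homog (kamekoDegree s)) :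
    kamekoLift i g ∈ homog (kamekoDegree (s + 1)) := by
  have h := IsHomogeneous.mul (varProd_mem_homog {i}ᶜ) (IsHomogeneous.pow hg 2)
  rw [card_compl_singleton, mul_comm (kamekoDegree s), add_comm] at h
  exact h

theorem kamekoLift_mem_hitSub (i : Fin 4) (hg : g ∈ hitSub (kamekoDegree s)) :
    kamekoLift i g ∈ hitSub (kamekoDegree (s + 1)) :=
  varProd_mul_sq_mem_hitSub (card_compl_singleton i) (odd_kamekoDegree s) hg

theorem X_mul_sq_mem_hitSub_kamekoDegree (i : Fin 4) (hg : g ∈ homog (kamekoDegree s + 1)) :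
    X i * g ^ 2 ∈ hitSub (kamekoDegree (s + 1)) :=
  X_mul_sq_mem_hitSub (Nat.succ_pos _) (odd_kamekoDegree s).add_one i hg

theorem X_mul_varProd_univ_mul_sq (i : Fin 4) (g : P4) :
    X i * (varProd Finset.univ * g ^ 2) = kamekoLift i (X i * g) := by
  have h : varProd Finset.univ = X i * varProd {i}ᶜ := by
    rw [← varProd_insert (by simp), ← Finset.compl_erase]
    simp
  rw [h, kamekoLift_apply]
  ring

theorem sum_kamekoLift_pow_X_mul_mem_hitSub (t : ℕ) (hg : g ∈ homog (kamekoDegree s - 1)) :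
    ∑ i, (kamekoLift i ^ (t + 1)) (X i * g) ∈ hitSub (kamekoDegree (s + t + 1)) := by
  induction t generalizing s g with
  | zero =>
    simp only [zero_add, pow_one]
    exact sum_varProd_compl_mul_sq_mem_hitSub (odd_kamekoDegree s) hg
  | succ t ih =>
    simp only [pow_succ _ (t + 1), Module.End.mul_apply, ← X_mul_varProd_univ_mul_sq]
    rw [show s + (t + 1) + 1 = s + 1 + t + 1 by ring]
    refine ih ?_
    have h := IsHomogeneous.mul (varProd_mem_homog Finset.univ) (IsHomogeneous.pow hg 2)
    have h3 := three_le_kamekoDegree s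
    rwa [Finset.card_univ, Fintype.card_fin, show 4 + (kamekoDegree s - 1) * 2 =
      kamekoDegree (s + 1) - 1 by rw [kamekoDegree]; omega] at h

theorem kamekoLift_pow_mem_hitSub (i : Fin 4) (t : ℕ) (hg : g ∈ hitSub (kamekoDegree s)) :
    (kamekoLift i ^ t) g ∈ hitSub (kamekoDegree (s + t)) := by
  induction t with
  | zero => exact hg
  | succ t ih => rw [pow_succ', Module.End.mul_apply]; exact kamekoLift_mem_hitSub i ih

theorem exists_compl_singleton_eq {i l : Fin 4} (h : i ≠ l) : ∃ j k, j ≠ k ∧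
    i ∉ ({j, k} : Finset (Fin 4)) ∧ l ∉ ({j, k} : Finset (Fin 4)) ∧
    ({i}ᶜ : Finset (Fin 4)) = {l, j, k} ∧ ({l}ᶜ : Finset (Fin 4)) = {i, j, k} := by
  decide +revert

theorem kamekoLift_pow_kamekoLift_comm (i l : Fin 4) (t : ℕ) (hg : g ∈ homog (kamekoDegree s)) :
    (kamekoLift i ^ (t + 1)) (kamekoLift l g) ≡ (kamekoLift l ^ (t + 1)) (kamekoLift i g)
      [SMOD hitSub (kamekoDegree (s + 1 + t + 1))] := by
  obtain rfl | hil := eq_or_ne i l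
  · rfl
  obtain ⟨j, k, hjk, hi, hl, hci, hcl⟩ := exists_compl_singleton_eq hil
  have hX {a : Fin 4} : X a * g ∈ homog (kamekoDegree s + 1) :=
    add_comm 1 (kamekoDegree s) ▸ IsHomogeneous.mul (isHomogeneous_X _ a) hg
  have hjk2 : varProd {j, k} * g ^ 2 ∈ homog (kamekoDegree (s + 1) - 1) := by
    have h := IsHomogeneous.mul (varProd_mem_homog {j, k}) (IsHomogeneous.pow hg 2)
    rwa [Finset.card_pair hjk, show 2 + kamekoDegree s * 2 = kamekoDegree (s + 1) - 1 by
      rw [kamekoDegree]; omega] at h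
  -- The four products of `X j * X k * g ^ 2` with a variable are two lifts of `g` and two hit
  -- polynomials.
  have hsum := sum_kamekoLift_pow_X_mul_mem_hitSub (s := s + 1) t hjk2
  have hlift {a b : Fin 4} (ha : a ∉ ({j, k} : Finset (Fin 4)))
      (hb : ({b}ᶜ : Finset (Fin 4)) = {a, j, k}) :
      X a * (varProd {j, k} * g ^ 2) = kamekoLift b g := by
    rw [kamekoLift_apply, hb, varProd_insert ha, mul_assoc]
  have hj : X j * (varProd {j, k} * g ^ 2) = X k * (X j * g) ^ 2 := by
    rw [varProd, Finset.prod_pair hjk]; ring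
  have hk : X k * (varProd {j, k} * g ^ 2) = X j * (X k * g) ^ 2 := by
    rw [varProd, Finset.prod_pair hjk]; ring
  have hhit (a b : Fin 4) := kamekoLift_pow_mem_hitSub a (t + 1)
    (X_mul_sq_mem_hitSub_kamekoDegree b (hX (a := a)))
  rw [← Finset.sum_compl_add_sum {i}, hci, Finset.sum_insert hl, Finset.sum_pair hjk,
    Finset.sum_singleton, hlift hi hcl, hlift hl hci, hj, hk] at hsum
  rw [SModEq.sub_mem, CharTwo.sub_eq_add]
  refine (Submodule.add_mem_iff_left _ (add_mem (hhit j k) (hhit k j))).1 ?_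
  rwa [add_comm (_ : P4) ((kamekoLift i ^ _) _), ← add_assoc (_ : P4)] at hsum

end KamekoLift

section Words

theorem exists_perm_cons_cons_cons {α : Type*} [DecidableEq α] {w : List α} {a b : α}
    (hab : a ≠ b) (ha : 2 ≤ w.count a) (hb : b ∈ w) : ∃ u, w.Perm (a :: a :: b :: u) := by
  refine ⟨((w.erase a).erase a).erase b,
    (List.perm_cons_erase (List.count_pos_iff.1 (by omega))).trans (.cons _ ?_)⟩
  refine (List.perm_cons_erase (List.count_pos_iff.1 ?_)).trans (.cons _ ?_)
  · rw [List.count_erase_self]; omega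
  · exact List.perm_cons_erase ((List.mem_erase_of_ne hab.symm).2
      ((List.mem_erase_of_ne hab.symm).2 hb))

theorem apply_eq_of_toFinset_eq {α β : Type*} [DecidableEq α] {F : List α → β} {s : ℕ}
    (hperm : ∀ ⦃u v : List α⦄, u.length = s → u.Perm v → F u = F v)
    (hdouble : ∀ a b u, (a :: a :: b :: u).length = s →
      F (a :: a :: b :: u) = F (b :: b :: a :: u))
    {w v : List α} (hw : w.length = s) (hv : v.length = s) (h : w.toFinset = v.toFinset) :
    F w = F v := by
  induction hk : ((w : Multiset α) - v).card using Nat.strong_induction_on generalizing w with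
  | _ k ih =>
  have hcard : (w : Multiset α).card = (v : Multiset α).card := by simp [hw, hv]
  by_cases hle : (w : Multiset α) ≤ v
  · exact hperm hw (Multiset.coe_eq_coe.1 (Multiset.eq_of_le_of_card_le hle hcard.ge))
  have hnle : ¬ (v : Multiset α) ≤ w := fun hge =>
    hle (Multiset.eq_of_le_of_card_le hge hcard.le).ge
  simp only [Multiset.le_iff_count, not_forall, not_le, Multiset.coe_count] at hle hnle
  obtain ⟨a, ha⟩ := hle
  obtain ⟨b, hb⟩ := hnle
  have hmem (x : α) : 0 < w.count x ↔ 0 < v.count x := by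
    simp only [List.count_pos_iff, ← List.mem_toFinset, h]
  have hav : 0 < v.count a := (hmem a).1 (by omega)
  have hbw : 0 < w.count b := (hmem b).2 (by omega)
  have hab : a ≠ b := by rintro rfl; omega
  obtain ⟨u, hwu⟩ := exists_perm_cons_cons_cons hab (w := w) (by omega) (List.count_pos_iff.1 hbw)
  have hlen := hwu.length_eq
  have hcount (x : α) := hwu.count_eq x
  have herase : ((b :: b :: a :: u : List α) : Multiset α) - v =
      ((w : Multiset α) - v).erase a := by
    ext x
    have := hcount x
    grind [Multiset.count_sub, Multiset.coe_count, Multiset.count_erase_self,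
      Multiset.count_erase_of_ne]
  have haw : a ∈ (w : Multiset α) - v := by
    rw [← Multiset.count_pos, Multiset.count_sub, Multiset.coe_count, Multiset.coe_count]
    omega
  rw [hperm hw hwu, hdouble a b u (by rw [← hlen, hw])]
  refine ih _ ?_ (by simpa [hw] using hlen.symm) ?_ rfl
  · rw [herase, ← hk]
    exact Multiset.card_erase_lt_of_mem haw
  · rw [← h, List.toFinset_eq_of_perm _ _ hwu]
    ext x
    simp only [List.mem_toFinset, List.mem_cons]
    tauto

/-- The composite of the lifts along a word; the first letter is applied last. -/
def kamekoWord (w : List (Fin 4)) : P4 →ₗ[kk] P4 := (w.map kamekoLift).prod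

theorem kamekoWord_cons (i : Fin 4) (w : List (Fin 4)) (g : P4) :
    kamekoWord (i :: w) g = kamekoLift i (kamekoWord w g) := by
  rw [kamekoWord, List.map_cons, List.prod_cons, Module.End.mul_apply]
  rfl

theorem kamekoWord_append (w v : List (Fin 4)) (g : P4) :
    kamekoWord (w ++ v) g = kamekoWord w (kamekoWord v g) := by
  rw [kamekoWord, List.map_append, List.prod_append, Module.End.mul_apply]
  rfl

theorem kamekoWord_singleton (i : Fin 4) (g : P4) : kamekoWord [i] g = kamekoLift i g := by
  rw [kamekoWord, List.map_singleton, List.prod_singleton]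

theorem kamekoWord_replicate (s : ℕ) (i : Fin 4) (g : P4) :
    kamekoWord (List.replicate s i) g = (kamekoLift i ^ s) g := by
  rw [kamekoWord, List.map_replicate, List.prod_replicate]

variable {s : ℕ} {g : P4}

theorem kamekoWord_mem_homog (w : List (Fin 4)) (hg : g ∈ homog 3) :
    kamekoWord w g ∈ homog (kamekoDegree w.length) := by
  induction w with
  | nil => exact hg
  | cons i w ih => rw [kamekoWord_cons]; exact kamekoLift_mem_homog i ih

theorem kamekoWord_mem_hitSub (w : List (Fin 4)) (hg : g ∈ hitSub (kamekoDegree s)) :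
    kamekoWord w g ∈ hitSub (kamekoDegree (w.length + s)) := by
  induction w with
  | nil => rwa [List.length_nil, zero_add]
  | cons i w ih =>
    rw [kamekoWord_cons, List.length_cons, Nat.add_right_comm]
    exact kamekoLift_mem_hitSub i ih

theorem kamekoLift_smodEq {f : P4} (i : Fin 4) (h : f ≡ g [SMOD hitSub (kamekoDegree s)]) :
    kamekoLift i f ≡ kamekoLift i g [SMOD hitSub (kamekoDegree (s + 1))] := by
  rw [SModEq.sub_mem] at h ⊢
  rw [← map_sub]
  exact kamekoLift_mem_hitSub i h

theorem kamekoWord_smodEq_of_perm {w v : List (Fin 4)} (h : w.Perm v) (hg : g ∈ homog 3) :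
    kamekoWord w g ≡ kamekoWord v g [SMOD hitSub (kamekoDegree w.length)] := by
  induction h with
  | nil => rfl
  | cons i _ ih =>
    rw [kamekoWord_cons, kamekoWord_cons]
    exact kamekoLift_smodEq i ih
  | swap i j w =>
    simp only [kamekoWord_cons]
    have h := kamekoLift_pow_kamekoLift_comm j i 0 (kamekoWord_mem_homog w hg)
    simp only [zero_add, pow_one] at h
    exact h
  | trans h _ ih ih' =>
    rw [← h.length_eq] at ih'
    exact ih.trans ih'

theorem kamekoWord_smodEq_of_toFinset_eq {w v : List (Fin 4)} (hw : w.length = s)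
    (hv : v.length = s) (h : w.toFinset = v.toFinset) (hg : g ∈ homog 3) :
    kamekoWord w g ≡ kamekoWord v g [SMOD hitSub (kamekoDegree s)] := by
  refine apply_eq_of_toFinset_eq (F := fun w => (Submodule.Quotient.mk (kamekoWord w g) :
    P4 ⧸ hitSub (kamekoDegree s))) (fun w v hw hwv => ?_) (fun a b u hu => ?_) hw hv h
  · subst hw
    exact kamekoWord_smodEq_of_perm hwv hg
  · subst hu
    have h := kamekoLift_pow_kamekoLift_comm a b 1 (kamekoWord_mem_homog u hg)
    simp only [one_add_one_eq_two, pow_two, Module.End.mul_apply] at h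
    simp only [kamekoWord_cons]
    exact SModEq.def.1 h

theorem X_sq_mul_X_smodEq (i j : Fin 4) :
    (X i ^ 2 * X j : P4) ≡ X j ^ 2 * X i [SMOD hitSub 3] := by
  have hij : X i * X j ∈ homog 2 := IsHomogeneous.mul (isHomogeneous_X _ i) (isHomogeneous_X _ j)
  have h := homogeneousComponent_sqTotal_mem_hitSub (n := 3) (by omega) hij
  rw [map_mul, sqTotal_linear (isHomogeneous_X _ j), mul_add, map_add, mul_comm (sqTotal _),
    mul_comm (sqTotal _), homogeneousComponent_mul_of_isHomogeneous (isHomogeneous_X _ j),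
    homogeneousComponent_mul_of_isHomogeneous (isHomogeneous_X_pow j 2), if_pos (by omega),
    if_pos (by omega), show 3 - 2 = 1 from rfl, show 3 - 1 = 2 * 1 from rfl,
    homogeneousComponent_sqTotal_two_mul (isHomogeneous_X _ i),
    homogeneousComponent_sqTotal_self (isHomogeneous_X _ i)] at h
  rwa [SModEq.sub_mem, CharTwo.sub_eq_add, mul_comm]

theorem prod_X_mem_homog (J : List (Fin 4)) : (J.map X).prod ∈ homog J.length := by
  induction J with
  | nil => exact isHomogeneous_one _ _
  | cons i J ih =>
    rw [List.map_cons, List.prod_cons, List.length_cons, add_comm]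
    exact IsHomogeneous.mul (isHomogeneous_X _ i) ih

theorem prod_X_smodEq_of_toFinset_eq {J K : List (Fin 4)} (hJ : J.length = 3)
    (hK : K.length = 3) (h : J.toFinset = K.toFinset) :
    ((J.map X).prod : P4) ≡ (K.map X).prod [SMOD hitSub 3] := by
  refine apply_eq_of_toFinset_eq (F := fun J => (Submodule.Quotient.mk (J.map X).prod :
    P4 ⧸ hitSub 3)) (fun J K _ hJK => ?_) (fun a b u hu => ?_) hJ hK h
  · rw [(hJK.map X).prod_eq]
  · obtain rfl : u = [] := List.length_eq_zero_iff.1 (by simpa using hu)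
    simpa [← mul_assoc, ← sq] using SModEq.def.1 (X_sq_mul_X_smodEq a b)

end Words

section SqrtCoeff

/-- The set of variables with odd exponent. -/
def oddSupport (m : Fin 4 →₀ ℕ) : Finset (Fin 4) := {i | Odd (m i)}

/-- The exponents of the square root of the square part of a monomial. -/
def halfExponent (m : Fin 4 →₀ ℕ) : Fin 4 →₀ ℕ := m.mapRange (· / 2) rfl

theorem monomial_eq_varProd_mul_sq (m : Fin 4 →₀ ℕ) :
    (monomial m 1 : P4) = varProd (oddSupport m) * monomial (halfExponent m) 1 ^ 2 := by
  simp only [monomial_eq, C_1, one_mul, Finsupp.prod_fintype _ _ fun i => pow_zero (X i : P4),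
    varProd, oddSupport, Finset.prod_filter, ← Finset.prod_pow, ← Finset.prod_mul_distrib,
    halfExponent, Finsupp.mapRange_apply, ← pow_mul]
  refine Finset.prod_congr rfl fun i _ => ?_
  split_ifs with h
  · rw [← pow_succ', Nat.div_two_mul_two_add_one_of_odd h]
  · rw [one_mul, Nat.div_two_mul_two_of_even (Nat.not_odd_iff_even.1 h)]

theorem halfExponent_add_two_nsmul (m m' : Fin 4 →₀ ℕ) :
    halfExponent (m + 2 • m') = halfExponent m + m' := by
  ext i
  simp only [halfExponent, Finsupp.mapRange_apply, Finsupp.add_apply, Finsupp.smul_apply,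
    smul_eq_mul]
  omega

theorem oddSupport_add_two_nsmul (m m' : Fin 4 →₀ ℕ) :
    oddSupport (m + 2 • m') = oddSupport m := by
  ext i
  simp [oddSupport, parity_simps]

/-- The coefficient `f_v` in the unique expansion `f = ∑ v, (∏ i ∈ v, X i) * f_v ^ 2`. -/
def sqrtCoeff (v : Finset (Fin 4)) : P4 →ₗ[kk] P4 :=
  (basisMonomials (Fin 4) kk).constr kk fun m =>
    if oddSupport m = v then monomial (halfExponent m) 1 else 0

theorem sqrtCoeff_monomial (v : Finset (Fin 4)) (m : Fin 4 →₀ ℕ) :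
    sqrtCoeff v (monomial m 1) =
      if oddSupport m = v then monomial (halfExponent m) 1 else 0 := by
  have h := (basisMonomials (Fin 4) kk).constr_basis kk
    (fun m => if oddSupport m = v then (monomial (halfExponent m) 1 : P4) else 0) m
  rwa [coe_basisMonomials] at h

theorem monomial_one_induction {p : P4 → Prop} (f : P4) (zero : p 0)
    (monomial_one : ∀ m, p (monomial m 1)) (add : ∀ f g, p f → p g → p (f + g)) : p f := by
  induction f using MvPolynomial.induction_on' with
  | monomial m c =>
    obtain rfl | rfl := kk_eq_zero_or_eq_one c
    · rwa [monomial_zero]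
    · exact monomial_one m
  | add f g hf hg => exact add f g hf hg

theorem sqrtCoeff_mul_sq (v : Finset (Fin 4)) (f g : P4) :
    sqrtCoeff v (f * g ^ 2) = sqrtCoeff v f * g := by
  induction f using monomial_one_induction with
  | zero => simp only [zero_mul, map_zero]
  | add f f' hf hf' => rw [add_mul, map_add, hf, hf', map_add, add_mul]
  | monomial_one m =>
    induction g using monomial_one_induction with
    | zero => simp only [zero_pow two_ne_zero, mul_zero, map_zero]
    | add g g' hg hg' => rw [CharTwo.add_sq, mul_add, map_add, hg, hg', mul_add]
    | monomial_one m' =>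
      rw [monomial_pow, monomial_mul, one_pow, mul_one, sqrtCoeff_monomial, sqrtCoeff_monomial,
        oddSupport_add_two_nsmul, halfExponent_add_two_nsmul, ite_mul, zero_mul, monomial_mul,
        mul_one]

theorem sqrtCoeff_varProd (v u : Finset (Fin 4)) :
    sqrtCoeff v (varProd u) = if u = v then 1 else 0 := by
  have hu : varProd u = monomial (Finsupp.indicator u fun _ _ => 1) 1 := by
    simp [monomial_eq, varProd, Finsupp.prod_fintype, Finsupp.indicator_apply, Finset.prod_ite_mem]
  have hodd : oddSupport (Finsupp.indicator u fun _ _ => 1) = u := by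
    ext i
    by_cases hi : i ∈ u <;> simp [oddSupport, Finsupp.indicator_apply, hi]
  have hhalf : halfExponent (Finsupp.indicator u fun _ _ => 1) = 0 := by
    ext i
    by_cases hi : i ∈ u <;> simp [halfExponent, Finsupp.indicator_apply, hi]
  rw [hu, sqrtCoeff_monomial, hodd, hhalf]
  rfl

theorem sqrtCoeff_varProd_mul_sq (v u : Finset (Fin 4)) (g : P4) :
    sqrtCoeff v (varProd u * g ^ 2) = if u = v then g else 0 := by
  rw [sqrtCoeff_mul_sq, sqrtCoeff_varProd, ite_mul, one_mul, zero_mul]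

theorem sqrtCoeff_sum_varProd_mul_sq (v : Finset (Fin 4)) (g : Finset (Fin 4) → P4) :
    sqrtCoeff v (∑ u, varProd u * g u ^ 2) = g v := by
  simp only [map_sum, sqrtCoeff_varProd_mul_sq, Finset.sum_ite_eq', Finset.mem_univ, if_true]

theorem exists_sum_varProd_mul_sq (f : P4) :
    ∃ g : Finset (Fin 4) → P4, f = ∑ u, varProd u * g u ^ 2 := by
  induction f using monomial_one_induction with
  | zero => exact ⟨0, by simp⟩
  | add f f' hf hf' =>
    obtain ⟨g, rfl⟩ := hf
    obtain ⟨g', rfl⟩ := hf'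
    exact ⟨g + g', by simp only [Pi.add_apply, CharTwo.add_sq, mul_add, Finset.sum_add_distrib]⟩
  | monomial_one m =>
    refine ⟨Pi.single (oddSupport m) (monomial (halfExponent m) 1), ?_⟩
    rw [Finset.sum_eq_single_of_mem (oddSupport m) (Finset.mem_univ _), Pi.single_eq_same,
      ← monomial_eq_varProd_mul_sq]
    intro u _ hu
    rw [Pi.single_eq_of_ne hu, zero_pow two_ne_zero, mul_zero]

theorem sum_varProd_mul_sqrtCoeff_sq (f : P4) : ∑ v, varProd v * sqrtCoeff v f ^ 2 = f := by
  obtain ⟨g, rfl⟩ := exists_sum_varProd_mul_sq f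
  simp only [sqrtCoeff_sum_varProd_mul_sq]

theorem sqrtCoeff_homogeneousComponent {n e : ℕ} (v : Finset (Fin 4)) (h : n = v.card + 2 * e)
    (f : P4) :
    sqrtCoeff v (homogeneousComponent n f) = homogeneousComponent e (sqrtCoeff v f) := by
  obtain ⟨g, rfl⟩ := exists_sum_varProd_mul_sq f
  rw [sqrtCoeff_sum_varProd_mul_sq, map_sum, map_sum,
    Finset.sum_eq_single_of_mem v (Finset.mem_univ v),
    homogeneousComponent_mul_sq (varProd_mem_homog v) h, sqrtCoeff_varProd_mul_sq, if_pos rfl]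
  intro u _ hu
  by_cases hn : ∃ e', n = u.card + 2 * e'
  · obtain ⟨e', he'⟩ := hn
    rw [homogeneousComponent_mul_sq (varProd_mem_homog u) he', sqrtCoeff_varProd_mul_sq, if_neg hu]
  · rw [homogeneousComponent_mul_sq_eq_zero (varProd_mem_homog u) fun e' he' => (hn ⟨e', he'⟩).elim,
      map_zero]

theorem sqrtCoeff_mem_homog {n e : ℕ} {v : Finset (Fin 4)} {f : P4} (h : n = v.card + 2 * e)
    (hf : f ∈ homog n) : sqrtCoeff v f ∈ homog e := by
  have hfn : homogeneousComponent n f = f := homogeneousComponent_eq_self hf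
  rw [← hfn, sqrtCoeff_homogeneousComponent v h]
  exact homogeneousComponent_mem e _

theorem sqrtCoeff_eq_zero {n : ℕ} {v : Finset (Fin 4)} {f : P4} (hf : f ∈ homog n)
    (h : ∀ e, n ≠ v.card + 2 * e) : sqrtCoeff v f = 0 := by
  have hfn : homogeneousComponent n f = f := homogeneousComponent_eq_self hf
  obtain ⟨g, rfl⟩ := exists_sum_varProd_mul_sq f
  rw [← hfn, map_sum, map_sum]
  refine Finset.sum_eq_zero fun u _ => ?_
  by_cases hn : ∃ e, n = u.card + 2 * e
  · obtain ⟨e, he⟩ := hn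
    rw [homogeneousComponent_mul_sq (varProd_mem_homog u) he, sqrtCoeff_varProd_mul_sq, if_neg]
    rintro rfl
    exact h e he
  · rw [homogeneousComponent_mul_sq_eq_zero (varProd_mem_homog u) fun e he => (hn ⟨e, he⟩).elim,
      map_zero]

end SqrtCoeff

section Straightening

/-- The combination `∑ i, e (S ∪ {i}) (T ∪ {i})`. If `e S T` is the function `l ^ S * p ^ T` of two
`0-1`-vectors `l` and `p`, it is the function `l ^ S * p ^ T * ∑ i, l i * p i`, which vanishes on
flags. -/
def flagRelation {ι M : Type*} [Fintype ι] [DecidableEq ι] [AddCommMonoid M]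
    (e : Finset ι → Finset ι → M) (S T : Finset ι) : M :=
  ∑ i, e (insert i S) (insert i T)

variable {ι : Type*} [LinearOrder ι]

/-- The pairs indexing the normal forms modulo the relations `flagRelation e S T`. -/
def IsStandardPair (S T : Finset ι) : Prop :=
  ∀ k ∈ S ∩ T, ∃ j < k, j ∉ S ∧ j ∉ T

instance [Fintype ι] (S T : Finset ι) : Decidable (IsStandardPair S T) :=
  inferInstanceAs (Decidable (∀ k ∈ S ∩ T, ∃ j < k, j ∉ S ∧ j ∉ T))

theorem exists_notMem_or_notMem_of_not_isStandardPair {S T : Finset ι}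
    (h : ¬ IsStandardPair S T) :
    ∃ k ∈ S ∩ T, (∀ m ∈ S ∩ T, k ≤ m) ∧ ∀ j < k, j ∈ S ∨ j ∈ T := by
  simp only [IsStandardPair, not_forall, not_exists, not_and, not_not] at h
  obtain ⟨k, hk, hkj⟩ := h
  refine ⟨(S ∩ T).min' ⟨k, hk⟩, Finset.min'_mem _ _, fun m hm => Finset.min'_le _ _ hm,
    fun j hj => ?_⟩
  rw [or_iff_not_imp_left]
  exact hkj j (hj.trans_le (Finset.min'_le _ _ hk))

theorem isStandardPair_insert_erase {S T : Finset ι} {i k : ι} (hk : ∀ m ∈ S ∩ T, k ≤ m)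
    (hj : ∀ j < k, j ∈ S ∨ j ∈ T) (hik : i ≠ k) (hiS : i ∉ S) (hiT : i ∉ T) :
    IsStandardPair (insert i (S.erase k)) (insert i (T.erase k)) := by
  intro m hm
  refine ⟨k, ?_, by simp [hik.symm], by simp [hik.symm]⟩
  simp only [Finset.mem_inter, Finset.mem_insert, Finset.mem_erase] at hm
  obtain rfl | hmk := eq_or_ne m i
  · exact lt_of_le_of_ne (not_lt.1 fun h => (hj m h).elim hiS hiT) hik.symm
  · simp only [hmk, false_or] at hm
    exact lt_of_le_of_ne (hk m (Finset.mem_inter.2 ⟨hm.1.2, hm.2.2⟩)) hm.1.1.symm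

theorem mem_sup_span_isStandardPair [Fintype ι] {R M : Type*} [Ring R] [AddCommGroup M] [Module R M]
    {e : Finset ι → Finset ι → M} {N : Submodule R M} {a b : ℕ}
    (hrel : ∀ S T : Finset ι, S.card < a → T.card < b → flagRelation e S T ∈ N)
    {S T : Finset ι} (hS0 : S.Nonempty) (hT0 : T.Nonempty) (hS : S.card ≤ a) (hT : T.card ≤ b) :
    e S T ∈ N ⊔ Submodule.span R {q | ∃ S T : Finset ι, S.Nonempty ∧ T.Nonempty ∧ S.card ≤ a ∧
      T.card ≤ b ∧ IsStandardPair S T ∧ q = e S T} := by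
  induction hn : S.card + T.card using Nat.strong_induction_on generalizing S T with
  | _ n ih =>
  by_cases hst : IsStandardPair S T
  · exact Submodule.mem_sup_right (Submodule.subset_span ⟨S, T, hS0, hT0, hS, hT, hst, rfl⟩)
  obtain ⟨k, hk, hmin, hj⟩ := exists_notMem_or_notMem_of_not_isStandardPair hst
  obtain ⟨hkS, hkT⟩ := Finset.mem_inter.1 hk
  have hSk := Finset.card_erase_add_one hkS
  have hTk := Finset.card_erase_add_one hkT
  have hr := hrel (S.erase k) (T.erase k) (by omega) (by omega)
  rw [flagRelation, ← Finset.add_sum_erase _ _ (Finset.mem_univ k), Finset.insert_erase hkS,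
    Finset.insert_erase hkT] at hr
  refine (Submodule.add_mem_iff_left _ (Submodule.sum_mem _ fun i hi => ?_)).1
    (Submodule.mem_sup_left hr)
  have hik : i ≠ k := (Finset.mem_erase.1 hi).1
  have hmem {u : Finset ι} (h : i ∈ u) : i ∈ u.erase k := Finset.mem_erase.2 ⟨hik, h⟩
  have hSi := Finset.card_insert_le i (S.erase k)
  have hTi := Finset.card_insert_le i (T.erase k)
  by_cases hiST : i ∈ S ∨ i ∈ T
  · refine ih _ ?_ (Finset.insert_nonempty _ _) (Finset.insert_nonempty _ _) (by omega)
      (by omega) rfl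
    obtain hiS | hiT := hiST
    · rw [Finset.insert_eq_self.2 (hmem hiS)]
      omega
    · rw [Finset.insert_eq_self.2 (hmem hiT)]
      omega
  · rw [not_or] at hiST
    exact Submodule.mem_sup_right (Submodule.subset_span ⟨_, _, Finset.insert_nonempty _ _,
      Finset.insert_nonempty _ _, by omega, by omega,
      isStandardPair_insert_erase hmin hj hik hiST.1 hiST.2, rfl⟩)

end Straightening

section Flags

/-- The pairs of a nonzero linear form `l` and a nonzero vector `p` with `l p = 0`, that is, the
pairs of a point and a plane through it in the projective space of dimension `3` over `kk`. -/
abbrev PointPlaneFlag : Type :=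
  {x : (Fin 4 → kk) × (Fin 4 → kk) // x.1 ≠ 0 ∧ x.2 ≠ 0 ∧ x.1 ⬝ᵥ x.2 = 0}

/-- The function `l ^ S * p ^ T` on flags. -/
def flagMonomial (S T : Finset (Fin 4)) (x : PointPlaneFlag) : kk :=
  (∏ i ∈ S, x.1.1 i) * ∏ i ∈ T, x.1.2 i

theorem card_pointPlaneFlag : Fintype.card PointPlaneFlag = 105 := by decide +kernel

theorem prod_insert_eq_mul_prod {ι : Type*} [DecidableEq ι] (x : ι → kk) (i : ι) (S : Finset ι) :
    ∏ j ∈ insert i S, x j = x i * ∏ j ∈ S, x j := by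
  by_cases h : i ∈ S
  · rw [Finset.insert_eq_self.2 h, ← Finset.mul_prod_erase S x h, ← mul_assoc, kk_mul_self]
  · exact Finset.prod_insert h

theorem flagRelation_flagMonomial (S T : Finset (Fin 4)) : flagRelation flagMonomial S T = 0 := by
  ext x
  have hx : ∑ i, x.1.1 i * x.1.2 i = 0 := x.2.2.2
  have hinsert (i : Fin 4) : flagMonomial (insert i S) (insert i T) x =
      x.1.1 i * x.1.2 i * flagMonomial S T x := by
    rw [flagMonomial, prod_insert_eq_mul_prod, prod_insert_eq_mul_prod, mul_mul_mul_comm]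
    rfl
  rw [flagRelation, Finset.sum_apply, Finset.sum_congr rfl fun i _ => hinsert i,
    ← Finset.sum_mul, hx, zero_mul, Pi.zero_apply]

/-- The pairs indexing the basis of standard monomials of the space of functions on flags. -/
abbrev StandardPair : Type :=
  {x : Finset (Fin 4) × Finset (Fin 4) // x.1.Nonempty ∧ x.2.Nonempty ∧ IsStandardPair x.1 x.2}

theorem card_standardPair : Fintype.card StandardPair = 105 := by decide +kernel

theorem prod_add_one_eq_ite (x a : Fin 4 → kk) :
    ∏ i, (x i + (a i + 1)) = if x = a then 1 else 0 := by
  decide +revert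

theorem exists_sum_mul_prod_eq_ite (a : Fin 4 → kk) (ha : a ≠ 0) :
    ∃ c : Finset (Fin 4) → kk, c ∅ = 0 ∧
      ∀ x : Fin 4 → kk, (if x = a then 1 else 0) = ∑ S, c S * ∏ i ∈ S, x i := by
  refine ⟨fun S => ∏ i ∈ Finset.univ \ S, (a i + 1), ?_, fun x => ?_⟩
  · obtain ⟨i, hi⟩ := Function.ne_iff.1 ha
    refine Finset.prod_eq_zero (i := i) (by simp) ?_
    have h (c : kk) : c ≠ 0 → c + 1 = 0 := by decide +revert
    exact h _ hi
  · rw [← prod_add_one_eq_ite, Finset.prod_add, Finset.powerset_univ]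
    exact Finset.sum_congr rfl fun S _ => mul_comm _ _

theorem span_flagMonomial_eq_top :
    Submodule.span kk {q | ∃ S T : Finset (Fin 4), S.Nonempty ∧ T.Nonempty ∧
      q = flagMonomial S T} = ⊤ := by
  rw [eq_top_iff, ← (Pi.basisFun kk PointPlaneFlag).span_eq, Submodule.span_le]
  rintro _ ⟨x, rfl⟩
  obtain ⟨c, hc0, hc⟩ := exists_sum_mul_prod_eq_ite x.1.1 x.2.1
  obtain ⟨d, hd0, hd⟩ := exists_sum_mul_prod_eq_ite x.1.2 x.2.2.1
  have hx : Pi.basisFun kk PointPlaneFlag x = ∑ S, ∑ T, (c S * d T) • flagMonomial S T := by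
    ext y
    have hy : (if y = x then 1 else 0 : kk) =
        (if y.1.1 = x.1.1 then 1 else 0) * if y.1.2 = x.1.2 then 1 else 0 := by
      simp only [Subtype.ext_iff, Prod.ext_iff, ite_and, mul_ite, mul_one, mul_zero]
      split_ifs <;> rfl
    rw [Pi.basisFun_apply, Pi.single_apply, hy, hc, hd, Finset.sum_mul_sum]
    simp only [Finset.sum_apply, Pi.smul_apply, flagMonomial, smul_eq_mul, mul_mul_mul_comm]
  rw [hx]
  refine Submodule.sum_mem _ fun S _ => Submodule.sum_mem _ fun T _ => ?_
  obtain rfl | hS := S.eq_empty_or_nonempty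
  · rw [hc0, zero_mul, zero_smul]
    exact zero_mem _
  obtain rfl | hT := T.eq_empty_or_nonempty
  · rw [hd0, mul_zero, zero_smul]
    exact zero_mem _
  exact Submodule.smul_mem _ _ (Submodule.subset_span ⟨S, T, hS, hT, rfl⟩)

theorem linearIndependent_flagMonomial :
    LinearIndependent kk fun x : StandardPair => flagMonomial x.1.1 x.1.2 := by
  refine linearIndependent_of_top_le_span_of_card_eq_finrank ?_ ?_
  · rw [← span_flagMonomial_eq_top, Submodule.span_le]
    rintro _ ⟨S, T, hS, hT, rfl⟩
    have h := mem_sup_span_isStandardPair (N := (⊥ : Submodule kk (PointPlaneFlag → kk)))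
      (a := 4) (b := 4) (fun S T _ _ => by rw [flagRelation_flagMonomial]; exact zero_mem _)
      hS hT (Finset.card_le_univ S) (Finset.card_le_univ T)
    rw [bot_sup_eq] at h
    refine Submodule.span_mono ?_ h
    rintro _ ⟨S, T, hS, hT, -, -, hST, rfl⟩
    exact ⟨⟨(S, T), hS, hT, hST⟩, rfl⟩
  · rw [card_standardPair, Module.finrank_fintype_fun_eq_card, card_pointPlaneFlag]

end Flags

section KamekoMonomials

variable {s : ℕ} {f : P4}

theorem eq_singleton_or_eq_compl_singleton_of_odd_card {v : Finset (Fin 4)} (h : Odd v.card) :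
    (∃ i, v = {i}) ∨ ∃ i, v = {i}ᶜ := by
  decide +revert

theorem sqrtCoeff_compl_singleton_mem_homog (i : Fin 4) (hf : f ∈ homog (kamekoDegree (s + 1))) :
    sqrtCoeff {i}ᶜ f ∈ homog (kamekoDegree s) :=
  sqrtCoeff_mem_homog (by rw [card_compl_singleton, kamekoDegree, add_comm]) hf

theorem smodEq_sum_kamekoLift_sqrtCoeff (hf : f ∈ homog (kamekoDegree (s + 1))) :
    f ≡ ∑ i, kamekoLift i (sqrtCoeff {i}ᶜ f) [SMOD hitSub (kamekoDegree (s + 1))] := by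
  have himage : ∑ i, kamekoLift i (sqrtCoeff {i}ᶜ f) =
      ∑ v ∈ Finset.univ.image fun i : Fin 4 => ({i}ᶜ : Finset (Fin 4)),
        varProd v * sqrtCoeff v f ^ 2 :=
    (Finset.sum_image (f := fun v => varProd v * sqrtCoeff v f ^ 2) fun i _ j _ h =>
      Finset.singleton_injective (compl_injective h)).symm
  nth_rw 1 [SModEq.sub_mem, himage, ← sum_varProd_mul_sqrtCoeff_sq f,
    ← Finset.sum_compl_add_sum (Finset.univ.image fun i : Fin 4 => ({i}ᶜ : Finset (Fin 4))),
    add_sub_cancel_right]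
  refine Submodule.sum_mem _ fun v hv => ?_
  obtain hodd | heven := (Nat.even_or_odd v.card).symm
  · obtain ⟨i, rfl⟩ | ⟨i, rfl⟩ := eq_singleton_or_eq_compl_singleton_of_odd_card hodd
    · rw [varProd_singleton]
      refine X_mul_sq_mem_hitSub_kamekoDegree i (sqrtCoeff_mem_homog ?_ hf)
      rw [Finset.card_singleton, kamekoDegree]
      omega
    · simp at hv
  · have hodd := odd_kamekoDegree (s + 1)
    rw [sqrtCoeff_eq_zero hf (by grind), zero_pow two_ne_zero, mul_zero]
    exact zero_mem _

theorem homog_eq_span_prod_X (n : ℕ) :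
    homog n = Submodule.span kk {q | ∃ J : List (Fin 4), J.length = n ∧ q = (J.map X).prod} := by
  rw [homog, ← homogeneousSubmodule_one_pow, homogeneousSubmodule_one_eq_span_X,
    Submodule.span_pow]
  congr 1
  ext q
  rw [Set.mem_pow]
  constructor
  · rintro ⟨x, rfl⟩
    choose i hi using fun j => (x j).2
    refine ⟨List.ofFn i, List.length_ofFn, ?_⟩
    simp only [List.map_ofFn, Function.comp_def, hi]
  · rintro ⟨J, rfl, rfl⟩
    refine ⟨fun j => ⟨X (J.get j), J.get j, rfl⟩, ?_⟩
    simp only [← Function.comp_def X, ← List.map_ofFn, List.ofFn_get]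

/-- The span of the lifts of the cubic monomials along the words of length `s`. -/
def kamekoWordSpan (s : ℕ) : Submodule kk P4 :=
  Submodule.span kk {q | ∃ w J : List (Fin 4), w.length = s ∧ J.length = 3 ∧
    q = kamekoWord w (J.map X).prod}

theorem map_kamekoLift_kamekoWordSpan_le (i : Fin 4) (s : ℕ) :
    (kamekoWordSpan s).map (kamekoLift i) ≤ kamekoWordSpan (s + 1) := by
  rw [kamekoWordSpan, Submodule.map_span]
  refine Submodule.span_mono ?_
  rintro _ ⟨_, ⟨w, J, hw, hJ, rfl⟩, rfl⟩
  exact ⟨i :: w, J, congrArg (· + 1) hw, hJ, (kamekoWord_cons i w _).symm⟩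

theorem homog_le_kamekoWordSpan_sup_hitSub (s : ℕ) :
    homog (kamekoDegree s) ≤ kamekoWordSpan s ⊔ hitSub (kamekoDegree s) := by
  induction s with
  | zero =>
    rw [kamekoDegree, homog_eq_span_prod_X]
    refine le_sup_of_le_left (Submodule.span_mono ?_)
    rintro q ⟨J, hJ, rfl⟩
    exact ⟨[], J, rfl, hJ, rfl⟩
  | succ s ih =>
    intro f hf
    have hlift (i : Fin 4) : (kamekoWordSpan s ⊔ hitSub (kamekoDegree s)).map (kamekoLift i) ≤
        kamekoWordSpan (s + 1) ⊔ hitSub (kamekoDegree (s + 1)) := by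
      rw [Submodule.map_sup]
      exact sup_le_sup (map_kamekoLift_kamekoWordSpan_le i s)
        (Submodule.map_le_iff_le_comap.2 fun g hg => kamekoLift_mem_hitSub i hg)
    rw [← sub_add_cancel f (∑ i, kamekoLift i (sqrtCoeff {i}ᶜ f))]
    refine add_mem (Submodule.mem_sup_right (SModEq.sub_mem.1 (smodEq_sum_kamekoLift_sqrtCoeff hf)))
      (Submodule.sum_mem _ fun i _ => ?_)
    exact hlift i (Submodule.mem_map_of_mem (ih (sqrtCoeff_compl_singleton_mem_homog i hf)))

/-- A word of length `s` with set of letters `S`, for nonempty `S` with at most `s` elements. -/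
def wordOn (s : ℕ) (S : Finset (Fin 4)) : List (Fin 4) :=
  S.toList.rightpad s (S.toList.headD 0)

theorem length_wordOn {S : Finset (Fin 4)} (hS : S.card ≤ s) : (wordOn s S).length = s := by
  rw [wordOn, List.length_rightpad, Finset.length_toList, max_eq_left hS]

theorem toFinset_wordOn {S : Finset (Fin 4)} (hS : S.Nonempty) : (wordOn s S).toFinset = S := by
  have hhead : S.toList.headD 0 ∈ S := by
    obtain ⟨a, l, hl⟩ := List.exists_cons_of_ne_nil (hS.toList_ne_nil)
    rw [hl, List.headD_cons, ← Finset.mem_toList, hl]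
    exact List.mem_cons_self
  ext i
  simp only [wordOn, List.rightpad, List.mem_toFinset, List.mem_append, Finset.mem_toList,
    List.mem_replicate, or_iff_left_iff_imp]
  rintro ⟨_, rfl⟩
  exact hhead

/-- The representative of all lifts `kamekoWord w (x_i x_j x_k)` for which the word `w`, of length
`s`, has set of letters `S` and `T = {i, j, k}`. -/
def kamekoMonomial (s : ℕ) (S T : Finset (Fin 4)) : P4 :=
  kamekoWord (wordOn s S) ((wordOn 3 T).map X).prod

theorem kamekoWord_smodEq_kamekoMonomial {w J : List (Fin 4)} {S T : Finset (Fin 4)}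
    (hw : w.length = s) (hJ : J.length = 3) (hS : w.toFinset = S) (hT : J.toFinset = T)
    (hS0 : S.Nonempty) :
    kamekoWord w (J.map X).prod ≡ kamekoMonomial s S T [SMOD hitSub (kamekoDegree s)] := by
  have hT0 : T.Nonempty := by
    rw [← hT, List.toFinset_nonempty_iff]
    rintro rfl
    cases hJ
  have hSs : (wordOn s S).length = s :=
    length_wordOn (by rw [← hS, ← hw]; exact List.toFinset_card_le w)
  have hT3 : (wordOn 3 T).length = 3 :=
    length_wordOn (by rw [← hT, ← hJ]; exact List.toFinset_card_le J)
  refine (kamekoWord_smodEq_of_toFinset_eq hw hSs (hS.trans (toFinset_wordOn hS0).symm)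
    (hJ ▸ prod_X_mem_homog J)).trans ?_
  have h := prod_X_smodEq_of_toFinset_eq hJ hT3 (hT.trans (toFinset_wordOn hT0).symm)
  rw [SModEq.sub_mem] at h ⊢
  rw [kamekoMonomial, ← map_sub]
  simpa only [hSs, add_zero] using kamekoWord_mem_hitSub (s := 0) (wordOn s S) h

theorem homog_le_span_kamekoMonomial (hs : s ≠ 0) :
    homog (kamekoDegree s) ≤ Submodule.span kk {q | ∃ S T : Finset (Fin 4), S.Nonempty ∧
      S.card ≤ s ∧ T.Nonempty ∧ T.card ≤ 3 ∧ q = kamekoMonomial s S T} ⊔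
        hitSub (kamekoDegree s) := by
  refine (homog_le_kamekoWordSpan_sup_hitSub s).trans (sup_le (Submodule.span_le.2 ?_) le_sup_right)
  rintro _ ⟨w, J, hw, hJ, rfl⟩
  have hw0 : w.toFinset.Nonempty := by
    rw [List.toFinset_nonempty_iff]
    rintro rfl
    exact hs hw.symm
  have hJ0 : J.toFinset.Nonempty := by
    rw [List.toFinset_nonempty_iff]
    rintro rfl
    cases hJ
  have h := SModEq.sub_mem.1 (kamekoWord_smodEq_kamekoMonomial hw hJ rfl rfl hw0)
  rw [SetLike.mem_coe, ← sub_add_cancel (kamekoWord w _) (kamekoMonomial s w.toFinset J.toFinset)]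
  refine add_mem (Submodule.mem_sup_right h) (Submodule.mem_sup_left (Submodule.subset_span ?_))
  exact ⟨_, _, hw0, hw ▸ List.toFinset_card_le w, hJ0, hJ ▸ List.toFinset_card_le J, rfl⟩

theorem sum_kamekoWord_cons_mem_hitSub (w : List (Fin 4)) {q : P4} (hq : q ∈ homog 2) :
    ∑ i, kamekoWord (i :: w) (X i * q) ∈ hitSub (kamekoDegree (w.length + 1)) := by
  have hXq (i : Fin 4) : X i * q ∈ homog 3 := IsHomogeneous.mul (isHomogeneous_X _ i) hq
  have hperm (i : Fin 4) : kamekoWord (i :: w) (X i * q) ≡ kamekoWord (w ++ [i]) (X i * q)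
      [SMOD hitSub (kamekoDegree (w.length + 1))] := by
    have h := kamekoWord_smodEq_of_perm (List.perm_append_singleton i w).symm (hXq i)
    rwa [List.length_cons] at h
  have hsum := kamekoWord_mem_hitSub w (sum_kamekoLift_pow_X_mul_mem_hitSub (s := 0) 0 hq)
  simp only [map_sum, zero_add, pow_one, ← kamekoWord_singleton, ← kamekoWord_append] at hsum
  exact SModEq.zero.1 ((SModEq.sum fun i _ => hperm i).trans (SModEq.zero.2 hsum))

theorem flagRelation_kamekoMonomial_mem_hitSub {S T : Finset (Fin 4)} (hS : S.card < s)
    (hT0 : T.Nonempty) (hT : T.card ≤ 2) :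
    flagRelation (kamekoMonomial s) S T ∈ hitSub (kamekoDegree s) := by
  obtain ⟨s, rfl⟩ : ∃ t, s = t + 1 := ⟨s - 1, by omega⟩
  have hq : ((wordOn 2 T).map X).prod ∈ homog 2 := by
    simpa only [length_wordOn hT] using prod_X_mem_homog (wordOn 2 T)
  have hcongr (w : Fin 4 → List (Fin 4)) (hw : ∀ i, (w i).length = s + 1)
      (hwS : ∀ i, (w i).toFinset = insert i S) :
      ∑ i, kamekoWord (w i) (X i * ((wordOn 2 T).map X).prod) ≡
        flagRelation (kamekoMonomial (s + 1)) S T [SMOD hitSub (kamekoDegree (s + 1))] := by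
    refine SModEq.sum fun i _ => ?_
    rw [← List.prod_cons, ← List.map_cons]
    refine kamekoWord_smodEq_kamekoMonomial (hw i) ?_ (hwS i) ?_ (Finset.insert_nonempty i S)
    · rw [List.length_cons, length_wordOn hT]
    · rw [List.toFinset_cons, toFinset_wordOn hT0]
  obtain rfl | hS0 := S.eq_empty_or_nonempty
  · have h := sum_kamekoLift_pow_X_mul_mem_hitSub (s := 0) s hq
    simp only [← kamekoWord_replicate, zero_add] at h
    exact SModEq.zero.1 ((hcongr _ (fun i => List.length_replicate) fun i => by
      rw [List.toFinset_replicate_of_ne_zero s.succ_ne_zero]; rfl).symm.trans (SModEq.zero.2 h))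
  · have hw : (wordOn s S).length = s := length_wordOn (Nat.le_of_lt_succ hS)
    have h := sum_kamekoWord_cons_mem_hitSub (wordOn s S) hq
    rw [hw] at h
    exact SModEq.zero.1 ((hcongr (fun i => i :: wordOn s S) (fun _ => congrArg (· + 1) hw) fun i =>
      by rw [List.toFinset_cons, toFinset_wordOn hS0]).symm.trans (SModEq.zero.2 h))

end KamekoMonomials

section FlagFunctional

theorem sum_sum_eq_sum_diag_of_symm {ι M : Type*} [Fintype ι] [AddCommGroup M]
    [Module (ZMod 2) M] {a : ι → ι → M} (h : ∀ i j, a i j = a j i) :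
    ∑ i, ∑ j, a i j = ∑ i, a i i := by
  classical
  rw [← Finset.sum_product', ← Finset.sum_diag _ fun x => a x.1 x.2, Finset.univ_product_univ,
    ← sub_eq_zero, ← Finset.sum_sdiff_eq_sub (Finset.subset_univ _)]
  refine Finset.sum_involution (fun x _ => x.swap) (fun x _ => ?_) (fun x hx _ => ?_)
    (fun x hx => ?_) fun x _ => x.swap_swap
  · rw [Prod.fst_swap, Prod.snd_swap, h, ZModModule.add_self]
  · rw [Ne, Prod.swap_eq_iff_eq_swap, Prod.ext_iff]
    grind
  · grind

theorem sqrtCoeff_X_mul_varProd_of_mem {v : Finset (Fin 4)} {i : Fin 4} (hi : i ∈ v)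
    (u : Finset (Fin 4)) : sqrtCoeff v (X i * varProd u) = sqrtCoeff (v.erase i) (varProd u) := by
  rw [sqrtCoeff_varProd]
  by_cases hu : i ∈ u
  · rw [← Finset.insert_erase hu, varProd_insert (Finset.notMem_erase i u), ← mul_assoc, ← sq,
      mul_comm, sqrtCoeff_varProd_mul_sq, if_neg, if_neg]
    · exact fun h => Finset.notMem_erase i v (h ▸ Finset.mem_insert_self i _)
    · rintro rfl
      exact Finset.notMem_erase i u hi
  · rw [← varProd_insert hu, sqrtCoeff_varProd]
    grind

theorem sqrtCoeff_X_mul_varProd_of_notMem {v : Finset (Fin 4)} {i : Fin 4} (hi : i ∉ v)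
    (u : Finset (Fin 4)) :
    sqrtCoeff v (X i * varProd u) = X i * sqrtCoeff (insert i v) (varProd u) := by
  rw [sqrtCoeff_varProd]
  by_cases hu : i ∈ u
  · rw [← Finset.insert_erase hu, varProd_insert (Finset.notMem_erase i u), ← mul_assoc, ← sq,
      mul_comm, sqrtCoeff_varProd_mul_sq, mul_ite, mul_one, mul_zero]
    congr 1
    rw [eq_iff_iff]
    exact ⟨fun h => h ▸ rfl, fun h => by
      rw [← Finset.erase_insert (Finset.notMem_erase i u), h, Finset.erase_insert hi]⟩
  · rw [← varProd_insert hu, sqrtCoeff_varProd, if_neg, if_neg, mul_zero]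
    · grind
    · grind

theorem sqrtCoeff_X_mul_of_mem {v : Finset (Fin 4)} {i : Fin 4} (hi : i ∈ v) (f : P4) :
    sqrtCoeff v (X i * f) = sqrtCoeff (v.erase i) f := by
  obtain ⟨g, rfl⟩ := exists_sum_varProd_mul_sq f
  simp only [Finset.mul_sum, map_sum, ← mul_assoc, sqrtCoeff_mul_sq,
    sqrtCoeff_X_mul_varProd_of_mem hi]

theorem sqrtCoeff_X_mul_of_notMem {v : Finset (Fin 4)} {i : Fin 4} (hi : i ∉ v) (f : P4) :
    sqrtCoeff v (X i * f) = X i * sqrtCoeff (insert i v) f := by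
  obtain ⟨g, rfl⟩ := exists_sum_varProd_mul_sq f
  simp only [Finset.mul_sum, map_sum, ← mul_assoc, sqrtCoeff_mul_sq,
    sqrtCoeff_X_mul_varProd_of_notMem hi]

theorem sqrtCoeff_sqTotal (v : Finset (Fin 4)) (f : P4) :
    sqrtCoeff v (sqTotal f) =
      ∑ u with v ⊆ u, varProd (u \ v) * sqTotal (sqrtCoeff u f) := by
  obtain ⟨g, rfl⟩ := exists_sum_varProd_mul_sq f
  simp only [sqrtCoeff_sum_varProd_mul_sq]
  simp only [map_sum, sqTotal_varProd_mul_sq, sqrtCoeff_mul_sq, ← Finset.sum_mul,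
    Finset.sum_filter]
  refine Finset.sum_congr rfl fun u _ => ?_
  have hterm : ∀ w ∈ u.powerset, sqrtCoeff v (varProd u * varProd w) =
      if u \ w = v then varProd w else 0 := fun w hw => by
    rw [varProd_mul_of_subset (Finset.mem_powerset.1 hw), sqrtCoeff_varProd_mul_sq]
  rw [Finset.sum_congr rfl hterm, ← ite_zero_mul]
  congr 1
  split_ifs with huv
  · rw [Finset.sum_eq_single_of_mem (u \ v) (Finset.mem_powerset.2 Finset.sdiff_subset),
      if_pos (Finset.sdiff_sdiff_eq_self huv)]
    grind
  · refine Finset.sum_eq_zero fun w _ => if_neg ?_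
    rintro rfl
    exact huv Finset.sdiff_subset

theorem sqrtCoeff_compl_singleton_sqTotal (i : Fin 4) (f : P4) :
    sqrtCoeff {i}ᶜ (sqTotal f) =
      sqTotal (sqrtCoeff {i}ᶜ f) + X i * sqTotal (sqrtCoeff Finset.univ f) := by
  have hsup : ({u | {i}ᶜ ⊆ u} : Finset (Finset (Fin 4))) = {{i}ᶜ, Finset.univ} := by
    decide +revert
  rw [sqrtCoeff_sqTotal, hsup, Finset.sum_pair (by decide +revert), sdiff_self, varProd,
    Finset.bot_eq_empty, Finset.prod_empty, one_mul, ← Finset.compl_eq_univ_sdiff, compl_compl,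
    varProd_singleton]

theorem sqrtCoeff_kamekoLift (i j : Fin 4) (g : P4) :
    sqrtCoeff {j}ᶜ (kamekoLift i g) = if i = j then g else 0 := by
  rw [kamekoLift_apply, sqrtCoeff_varProd_mul_sq]
  simp only [compl_inj_iff, Finset.singleton_inj]

theorem hitSub_le_ker_sum_comp_sqrtCoeff {m n : ℕ} (hn : n = m + 1) {φ : Fin 4 → P4 →ₗ[kk] kk}
    (hφ : ∀ i, hitSub n ≤ LinearMap.ker (φ i)) (hX : ∀ f ∈ homog m, ∑ i, φ i (X i * f) = 0) :
    hitSub (2 * n + 3) ≤ LinearMap.ker (∑ i, φ i ∘ₗ sqrtCoeff {i}ᶜ) := by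
  refine hitSub_le_iff.2 fun d hd g hg => ?_
  have hcard (i : Fin 4) : 2 * n + 3 = ({i}ᶜ : Finset (Fin 4)).card + 2 * n := by
    rw [card_compl_singleton, add_comm]
  have hzero (i : Fin 4) :
      φ i (homogeneousComponent n (sqTotal (sqrtCoeff {i}ᶜ g))) = 0 := by
    by_cases hde : ∃ e, d = ({i}ᶜ : Finset (Fin 4)).card + 2 * e
    · obtain ⟨e, he⟩ := hde
      rw [card_compl_singleton] at he
      exact hφ i (homogeneousComponent_sqTotal_mem_hitSub (d := e) (by omega)
        (sqrtCoeff_mem_homog (by rw [he, card_compl_singleton]) hg))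
    · rw [sqrtCoeff_eq_zero hg fun e he => hde ⟨e, he⟩, map_zero, map_zero, map_zero]
  have hmul (i : Fin 4) : homogeneousComponent n (X i * sqTotal (sqrtCoeff Finset.univ g)) =
      X i * homogeneousComponent m (sqTotal (sqrtCoeff Finset.univ g)) := by
    rw [homogeneousComponent_mul_of_isHomogeneous (isHomogeneous_X _ i), if_pos (by omega), hn,
      Nat.add_sub_cancel]
  simp only [LinearMap.mem_ker, LinearMap.sum_apply, LinearMap.comp_apply,
    sqrtCoeff_homogeneousComponent _ (hcard _), sqrtCoeff_compl_singleton_sqTotal, map_add, hzero,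
    hmul, zero_add]
  exact hX _ (homogeneousComponent_mem m _)

theorem aeval_homogeneousComponent_sqTotal (p : Fin 4 → kk) {d : ℕ} {g : P4} (hg : g ∈ homog d)
    (t : ℕ) :
    aeval p (homogeneousComponent (d + t) (sqTotal g)) = (d.choose t : kk) * aeval p g := by
  induction hg using homog_induction generalizing t with
  | one =>
    rw [map_one, homogeneousComponent_of_mem (isHomogeneous_one _ _)]
    cases t <;> simp
  | zero => simp only [map_zero, mul_zero]
  | add d f g _ _ hf hg => rw [map_add, map_add, map_add, hf, hg, map_add, mul_add]
  | mul d l hl f hf ih =>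
    have hsq (c : kk) : c ^ 2 = c := by decide +revert
    rw [add_right_comm, homogeneousComponent_sqTotal_linear_mul hl, map_add, map_mul, map_mul, ih]
    cases t with
    | zero =>
      rw [add_zero, Nat.choose_zero_right, Nat.choose_zero_right, mul_left_comm, add_eq_left]
      split_ifs
      · rw [homogeneousComponent_sqTotal_of_lt hf (by omega), mul_zero, map_zero]
      · exact map_zero _
    | succ t =>
      rw [if_pos (by omega), ← add_assoc, Nat.add_sub_cancel, map_mul, map_pow, hsq, ih,
        Nat.choose_succ_succ', Nat.cast_add]
      ring

theorem hitSub_three_le_ker_aeval (p : Fin 4 → kk) :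
    hitSub 3 ≤ LinearMap.ker (aeval p : P4 →ₐ[kk] kk).toLinearMap := by
  refine hitSub_le_iff.2 fun d hd g hg => ?_
  have h := aeval_homogeneousComponent_sqTotal p hg (3 - d)
  have hchoose : (d.choose (3 - d) : kk) = 0 := by interval_cases d <;> rfl
  rwa [hchoose, zero_mul, Nat.add_sub_cancel' hd.le] at h

/-- The functional sending the lift `kamekoWord w q` of a cubic form `q` along a word `w` of length
`s` to `(∏ i ∈ w, l i) * q p`. -/
def flagFunctional (l p : Fin 4 → kk) : ℕ → P4 →ₗ[kk] kk
  | 0 => (aeval p).toLinearMap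
  | s + 1 => ∑ i, l i • flagFunctional l p s ∘ₗ sqrtCoeff {i}ᶜ

theorem flagFunctional_zero (l p : Fin 4 → kk) (f : P4) : flagFunctional l p 0 f = aeval p f := rfl

theorem flagFunctional_succ (l p : Fin 4 → kk) (s : ℕ) (f : P4) :
    flagFunctional l p (s + 1) f = ∑ i, l i * flagFunctional l p s (sqrtCoeff {i}ᶜ f) := by
  simp only [flagFunctional, LinearMap.sum_apply, LinearMap.smul_apply, LinearMap.comp_apply,
    smul_eq_mul]

theorem flagFunctional_kamekoLift (l p : Fin 4 → kk) (s : ℕ) (i : Fin 4) (g : P4) :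
    flagFunctional l p (s + 1) (kamekoLift i g) = l i * flagFunctional l p s g := by
  rw [flagFunctional_succ, Finset.sum_eq_single i, sqrtCoeff_kamekoLift, if_pos rfl]
  · intro j _ hj
    rw [sqrtCoeff_kamekoLift, if_neg hj.symm, map_zero, mul_zero]
  · simp

theorem flagFunctional_kamekoWord (l p : Fin 4 → kk) (w : List (Fin 4)) (q : P4) :
    flagFunctional l p w.length (kamekoWord w q) = (w.map l).prod * aeval p q := by
  induction w with
  | nil => exact (one_mul _).symm
  | cons i w ih =>
    rw [List.length_cons, kamekoWord_cons, flagFunctional_kamekoLift, ih, List.map_cons,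
      List.prod_cons, mul_assoc]

theorem sum_flagFunctional_X_mul {l p : Fin 4 → kk} (hlp : l ⬝ᵥ p = 0) (s : ℕ) (f : P4) :
    ∑ i, l i * flagFunctional l p s (X i * f) = 0 := by
  induction s generalizing f with
  | zero =>
    simp only [flagFunctional_zero, map_mul, aeval_X, ← mul_assoc, ← Finset.sum_mul]
    rw [show ∑ i, l i * p i = 0 from hlp, zero_mul]
  | succ s ih =>
    have hsymm (i j : Fin 4) : sqrtCoeff {j}ᶜ (X i * f) = sqrtCoeff {i}ᶜ (X j * f) := by
      obtain rfl | hij := eq_or_ne i j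
      · rfl
      · rw [sqrtCoeff_X_mul_of_mem (by simpa), sqrtCoeff_X_mul_of_mem (by simpa using hij.symm)]
        exact congrArg (sqrtCoeff · f) (by decide +revert)
    have hdiag (i : Fin 4) : sqrtCoeff {i}ᶜ (X i * f) = X i * sqrtCoeff Finset.univ f := by
      rw [sqrtCoeff_X_mul_of_notMem (by simp), show insert i {i}ᶜ = Finset.univ by decide +revert]
    simp only [flagFunctional_succ, Finset.mul_sum]
    rw [sum_sum_eq_sum_diag_of_symm fun i j => by rw [hsymm, mul_left_comm]]
    simp only [hdiag, ← mul_assoc, kk_mul_self, ih]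

theorem hitSub_le_ker_flagFunctional {l p : Fin 4 → kk} (hlp : l ⬝ᵥ p = 0) (s : ℕ) :
    hitSub (kamekoDegree s) ≤ LinearMap.ker (flagFunctional l p s) := by
  induction s with
  | zero => exact hitSub_three_le_ker_aeval p
  | succ s ih =>
    have h3 := three_le_kamekoDegree s
    refine hitSub_le_ker_sum_comp_sqrtCoeff (φ := fun i => l i • flagFunctional l p s)
      (m := kamekoDegree s - 1) (by omega) (fun i => ?_) fun f _ => sum_flagFunctional_X_mul hlp s f
    exact ih.trans fun f hf => by rw [LinearMap.mem_ker, LinearMap.smul_apply, hf, smul_zero]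

end FlagFunctional

section FlagEval

variable {s : ℕ} {f : P4}

/-- The restriction of a polynomial of degree `kamekoDegree s` to a function on flags. For
`3 ≤ s` its kernel in that degree consists of the hit polynomials. -/
def flagEval (s : ℕ) : P4 →ₗ[kk] PointPlaneFlag → kk :=
  LinearMap.pi fun x => flagFunctional x.1.1 x.1.2 s

theorem hitSub_le_ker_flagEval (s : ℕ) : hitSub (kamekoDegree s) ≤ LinearMap.ker (flagEval s) :=
  fun _ hf => funext fun x => hitSub_le_ker_flagFunctional x.2.2.2 s hf

theorem prod_map_eq_prod_toFinset {ι : Type*} [DecidableEq ι] (x : ι → kk) (w : List ι) :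
    (w.map x).prod = ∏ i ∈ w.toFinset, x i := by
  induction w with
  | nil => rfl
  | cons i w ih =>
    rw [List.map_cons, List.prod_cons, ih, List.toFinset_cons, prod_insert_eq_mul_prod]

theorem flagFunctional_kamekoMonomial (l p : Fin 4 → kk) {S T : Finset (Fin 4)} (hS0 : S.Nonempty)
    (hS : S.card ≤ s) (hT0 : T.Nonempty) :
    flagFunctional l p s (kamekoMonomial s S T) = (∏ i ∈ S, l i) * ∏ i ∈ T, p i := by
  have h := flagFunctional_kamekoWord l p (wordOn s S) ((wordOn 3 T).map X).prod
  simp only [length_wordOn hS, map_list_prod, List.map_map, Function.comp_def, aeval_X,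
    prod_map_eq_prod_toFinset, toFinset_wordOn hS0, toFinset_wordOn hT0] at h
  exact h

theorem flagEval_kamekoMonomial {S T : Finset (Fin 4)} (hS0 : S.Nonempty) (hS : S.card ≤ s)
    (hT0 : T.Nonempty) : flagEval s (kamekoMonomial s S T) = flagMonomial S T :=
  funext fun x => flagFunctional_kamekoMonomial x.1.1 x.1.2 hS0 hS hT0

theorem flagEval_flagRelation_kamekoMonomial {S T : Finset (Fin 4)} (hS : S.card < s) :
    flagEval s (flagRelation (kamekoMonomial s) S T) = 0 := by
  rw [flagRelation, map_sum, ← flagRelation_flagMonomial S T]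
  refine Finset.sum_congr rfl fun i _ => ?_
  exact flagEval_kamekoMonomial (Finset.insert_nonempty i S)
    ((Finset.card_insert_le i S).trans hS) (Finset.insert_nonempty i T)

theorem mem_hitSub_sup_span_of_flagEval_eq_zero (hs : s ≠ 0) (hf : f ∈ homog (kamekoDegree s))
    (h : flagEval s f = 0) :
    f ∈ hitSub (kamekoDegree s) ⊔ Submodule.span kk
      {q | ∃ S : Finset (Fin 4), S.card < s ∧ q = flagRelation (kamekoMonomial s) S ∅} := by
  set N := hitSub (kamekoDegree s) ⊔ Submodule.span kk
      {q | ∃ S : Finset (Fin 4), S.card < s ∧ q = flagRelation (kamekoMonomial s) S ∅}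
  have hN : N ≤ LinearMap.ker (flagEval s) := by
    refine sup_le (hitSub_le_ker_flagEval s) (Submodule.span_le.2 ?_)
    rintro _ ⟨S, hS, rfl⟩
    exact flagEval_flagRelation_kamekoMonomial hS
  have hrel (S T : Finset (Fin 4)) (hS : S.card < s) (hT : T.card < 3) :
      flagRelation (kamekoMonomial s) S T ∈ N := by
    obtain rfl | hT0 := T.eq_empty_or_nonempty
    · exact Submodule.mem_sup_right (Submodule.subset_span ⟨S, hS, rfl⟩)
    · exact Submodule.mem_sup_left
        (flagRelation_kamekoMonomial_mem_hitSub hS hT0 (Nat.le_of_lt_succ hT))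
  let v (x : {x : StandardPair // x.1.1.card ≤ s ∧ x.1.2.card ≤ 3}) : P4 :=
    kamekoMonomial s x.1.1.1 x.1.1.2
  have hspan : homog (kamekoDegree s) ≤ N ⊔ Submodule.span kk (Set.range v) := by
    refine (homog_le_span_kamekoMonomial hs).trans
      (sup_le (Submodule.span_le.2 ?_) (le_sup_of_le_left le_sup_left))
    rintro _ ⟨S, T, hS0, hS, hT0, hT, rfl⟩
    refine sup_le_sup_left (Submodule.span_mono ?_) N
      (mem_sup_span_isStandardPair hrel hS0 hT0 hS hT)
    rintro _ ⟨S, T, hS0, hT0, hS, hT, hST, rfl⟩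
    exact ⟨⟨⟨(S, T), hS0, hT0, hST⟩, hS, hT⟩, rfl⟩
  have hv : flagEval s ∘ v = (fun x : StandardPair => flagMonomial x.1.1 x.1.2) ∘ Subtype.val :=
    funext fun x => flagEval_kamekoMonomial x.1.2.1 x.2.1 x.1.2.2.1
  have hdisj : Disjoint (Submodule.span kk (Set.range v)) (LinearMap.ker (flagEval s)) :=
    Submodule.range_ker_disjoint
      (hv ▸ linearIndependent_flagMonomial.comp _ Subtype.val_injective)
  obtain ⟨n, hn, q, hq, rfl⟩ := Submodule.mem_sup.1 (hspan hf)
  have hq0 : q = 0 := by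
    rw [map_add, show flagEval s n = 0 from hN hn, zero_add] at h
    exact Submodule.disjoint_def.1 hdisj q hq h
  rwa [hq0, add_zero]

theorem kamekoMonomial_mem_homog {S T : Finset (Fin 4)} (hS : S.card ≤ s) (hT : T.card ≤ 3) :
    kamekoMonomial s S T ∈ homog (kamekoDegree s) := by
  have hJ := prod_X_mem_homog (wordOn 3 T)
  rw [length_wordOn hT] at hJ
  have h := kamekoWord_mem_homog (wordOn s S) hJ
  rwa [length_wordOn hS] at h

theorem exists_flagEval_eq (hs : 3 ≤ s) (φ : PointPlaneFlag → kk) :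
    ∃ f ∈ homog (kamekoDegree s), flagEval s f = φ := by
  have hcard : ∀ x : StandardPair, x.1.1.card ≤ 3 ∧ x.1.2.card ≤ 3 := by decide +kernel
  have : Nonempty StandardPair := Fintype.card_pos_iff.1 (by rw [card_standardPair]; norm_num)
  have htop := linearIndependent_flagMonomial.span_eq_top_of_card_eq_finrank
    (by rw [card_standardPair, Module.finrank_fintype_fun_eq_card, card_pointPlaneFlag])
  suffices h : Submodule.span kk (Set.range fun x : StandardPair => flagMonomial x.1.1 x.1.2) ≤
      (homog (kamekoDegree s)).map (flagEval s) from h (htop ▸ Submodule.mem_top)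
  rw [Submodule.span_le]
  rintro _ ⟨x, rfl⟩
  have hS : x.1.1.card ≤ s := (hcard x).1.trans hs
  exact ⟨_, kamekoMonomial_mem_homog hS (hcard x).2,
    flagEval_kamekoMonomial x.2.1 hS x.2.2.1⟩

end FlagEval

section Idempotence

theorem flagRelation_eq_add_of_nodup {M : Type*} [AddCommMonoid M]
    (e : Finset (Fin 4) → Finset (Fin 4) → M) {a b c d : Fin 4} (h : [a, b, c, d].Nodup)
    (S T : Finset (Fin 4)) :
    flagRelation e S T = e (insert a S) (insert a T) + (e (insert b S) (insert b T) +
      (e (insert c S) (insert c T) + e (insert d S) (insert d T))) := by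
  have huniv : Finset.univ = [a, b, c, d].toFinset := by decide +revert
  rw [flagRelation, huniv, List.sum_toFinset _ h]
  simp only [List.map_cons, List.map_nil, List.sum_cons, List.sum_nil, add_zero]

variable {M : Type*} [AddCommGroup M] [Module (ZMod 2) M]

theorem flagRelation_flagRelation {ι : Type*} [Fintype ι] [DecidableEq ι]
    (e : Finset ι → Finset ι → M) : flagRelation (flagRelation e) = flagRelation e := by
  ext S T
  have hsymm (i j : ι) : e (insert j (insert i S)) (insert j (insert i T)) =
      e (insert i (insert j S)) (insert i (insert j T)) := by
    rw [Finset.insert_comm, Finset.insert_comm j]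
  simp only [flagRelation]
  rw [sum_sum_eq_sum_diag_of_symm hsymm]
  simp only [Finset.insert_idem]

variable {r : Finset (Fin 4) → Finset (Fin 4) → M} {a b c d : Fin 4}

theorem apply_pair_triple_eq (hr : flagRelation r = r)
    (hr0 : ∀ S T, S.card ≤ 2 → T.Nonempty → T.card ≤ 2 → r S T = 0) (h : [a, b, c, d].Nodup) :
    r {a, b} {a, c, d} = r {a, b} {b, c, d} := by
  have hS (S : Finset (Fin 4)) (hS1 : S.card ≤ 1) :
      r (insert a S) {a, c, d} = r (insert b S) {b, c, d} := by
    have hz {U : Finset (Fin 4)} (hU : U.card ≤ 2) : r U {c, d} = 0 :=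
      hr0 U _ hU (Finset.insert_nonempty _ _) Finset.card_le_two
    have hSi (i : Fin 4) : (insert i S).card ≤ 2 :=
      (Finset.card_insert_le i S).trans (Nat.succ_le_succ hS1)
    have hrel := flagRelation_eq_add_of_nodup r h S {c, d}
    rw [hr, hz (hS1.trans one_le_two),
      Finset.insert_eq_self.2 (by simp : c ∈ ({c, d} : Finset (Fin 4))),
      Finset.insert_eq_self.2 (by simp : d ∈ ({c, d} : Finset (Fin 4))), hz (hSi c), hz (hSi d),
      add_zero, add_zero, ← ZModModule.sub_eq_add] at hrel
    exact sub_eq_zero.1 hrel.symm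
  have hA := hS {a} (Finset.card_singleton a).le
  have hB := hS {b} (Finset.card_singleton b).le
  rw [Finset.pair_comm b a, Finset.insert_eq_self.2 (Finset.mem_singleton_self a)] at hA
  rw [Finset.insert_eq_self.2 (Finset.mem_singleton_self b)] at hB
  exact hB.trans ((hS ∅ zero_le).symm.trans hA)

theorem apply_pair_empty_eq_zero (hr : flagRelation r = r)
    (hr0 : ∀ S T, S.card ≤ 2 → T.Nonempty → T.card ≤ 2 → r S T = 0) (hab : a ≠ b) :
    r {a, b} ∅ = 0 := by
  have hcompl : ∀ a b : Fin 4, a ≠ b → ∃ c d, [a, b, c, d].Nodup := by decide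
  obtain ⟨c, d, hnodup⟩ := hcompl a b hab
  have heq {x y : M} (h : 0 = x + y) : x = y := by
    rw [← ZModModule.sub_eq_add] at h
    exact sub_eq_zero.1 h.symm
  have hcard {i j : Fin 4} : ({i, j} : Finset (Fin 4)).card ≤ 2 := Finset.card_le_two
  have hS (T : Finset (Fin 4)) : r {a, b} T = r {a, b} (insert a T) + (r {a, b} (insert b T) +
      (r (insert c {a, b}) (insert c T) + r (insert d {a, b}) (insert d T))) := by
    have h := flagRelation_eq_add_of_nodup r hnodup {a, b} T
    rwa [hr, Finset.insert_eq_self.2 (Finset.mem_insert_self a {b}),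
      Finset.insert_eq_self.2 (by simp : b ∈ ({a, b} : Finset (Fin 4)))] at h
  have hc : r {c, a, b} {c} = r {d, a, b} {c, d} :=
    heq (by simpa [hr0, hcard, Finset.pair_comm d c] using hS {c})
  have hd : r {c, a, b} {c, d} = r {d, a, b} {d} :=
    heq (by simpa [hr0, hcard] using hS {d})
  have hcd : r {c, a, b} {c, d} = r {d, a, b} {c, d} := by
    have h := hS {c, d}
    rw [apply_pair_triple_eq hr hr0 hnodup, ← add_assoc, ZModModule.add_self, zero_add] at h
    exact heq (by simpa [hr0, hcard] using h)
  calc r {a, b} ∅ = r {c, a, b} {c} + r {d, a, b} {d} := by simpa [hr0, hcard] using hS ∅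
    _ = 0 := by rw [hc, ← hcd, hd, ZModModule.add_self]

end Idempotence

section KernelFlagEval

theorem flagRelation_kamekoMonomial_mem_homog {s : ℕ} {S T : Finset (Fin 4)} (hS : S.card < s)
    (hT : T.card ≤ 2) : flagRelation (kamekoMonomial s) S T ∈ homog (kamekoDegree s) :=
  Submodule.sum_mem _ fun i _ => kamekoMonomial_mem_homog
    ((Finset.card_insert_le i S).trans hS) ((Finset.card_insert_le i T).trans (Nat.succ_le_succ hT))

theorem flagRelation_kamekoMonomial_empty_mem_hitSub_of_card_add_two_le {s : ℕ}
    {S : Finset (Fin 4)} (hS : S.card + 2 ≤ s) :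
    flagRelation (kamekoMonomial s) S ∅ ∈ hitSub (kamekoDegree s) := by
  rw [← flagRelation_flagRelation, flagRelation]
  exact Submodule.sum_mem _ fun i _ => flagRelation_kamekoMonomial_mem_hitSub
    ((Nat.succ_le_succ (Finset.card_insert_le i S)).trans hS) (Finset.insert_nonempty i ∅)
    ((Finset.card_singleton i).le.trans one_le_two)

theorem flagRelation_kamekoMonomial_empty_mem_hitSub {s : ℕ} {S : Finset (Fin 4)} (hs : 3 ≤ s)
    (hS : S.card < s) : flagRelation (kamekoMonomial s) S ∅ ∈ hitSub (kamekoDegree s) := by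
  by_cases hS2 : S.card + 2 ≤ s
  · exact flagRelation_kamekoMonomial_empty_mem_hitSub_of_card_add_two_le hS2
  obtain ⟨a, ha, b, hb, hab⟩ := Finset.one_lt_card.1 (show 1 < S.card by omega)
  let r (U T : Finset (Fin 4)) : P4 ⧸ hitSub (kamekoDegree s) :=
    Submodule.Quotient.mk (flagRelation (kamekoMonomial s) (U ∪ (S \ {a, b})) T)
  have hr : flagRelation r = r := by
    ext U T
    have h := congrFun₂ (flagRelation_flagRelation (kamekoMonomial s)) (U ∪ (S \ {a, b})) T
    simp only [r, ← h]
    simp only [flagRelation, Finset.insert_union]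
    exact (map_sum (hitSub (kamekoDegree s)).mkQ _ _).symm
  have hr0 (U T : Finset (Fin 4)) (hU : U.card ≤ 2) (hT0 : T.Nonempty) (hT : T.card ≤ 2) :
      r U T = 0 := by
    refine (Submodule.Quotient.mk_eq_zero _).2
      (flagRelation_kamekoMonomial_mem_hitSub ?_ hT0 hT)
    have hdiff : (S \ {a, b}).card + 2 = S.card := by
      rw [← Finset.card_pair hab]
      exact Finset.card_sdiff_add_card_eq_card (by grind)
    have hunion := Finset.card_union_le U (S \ {a, b})
    omega
  have h := (Submodule.Quotient.mk_eq_zero _).1 (apply_pair_empty_eq_zero hr hr0 hab)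
  rwa [Finset.union_sdiff_of_subset (by grind)] at h

theorem mem_hitSub_of_flagEval_eq_zero {s : ℕ} {f : P4} (hs : 3 ≤ s)
    (hf : f ∈ homog (kamekoDegree s)) (h : flagEval s f = 0) : f ∈ hitSub (kamekoDegree s) := by
  refine (sup_le le_rfl (Submodule.span_le.2 ?_) : hitSub _ ⊔ _ ≤ hitSub _)
    (mem_hitSub_sup_span_of_flagEval_eq_zero (by omega) hf h)
  rintro _ ⟨S, hS, rfl⟩
  exact flagRelation_kamekoMonomial_empty_mem_hitSub hs hS

end KernelFlagEval

section Substitution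

variable (M N : Matrix (Fin 4) (Fin 4) kk) {n : ℕ} {f : P4}

theorem substM_X (i : Fin 4) : substM M (X i) = ∑ j, M i j • X j := aeval_X _ i

theorem substM_mul (f : P4) : substM (M * N) f = substM N (substM M f) := by
  refine AlgHom.congr_fun (algHom_ext fun i => ?_ : substM (M * N) = (substM N).comp (substM M)) f
  simp only [AlgHom.comp_apply, substM_X, map_sum, map_smul, Matrix.mul_apply, Finset.smul_sum,
    Finset.sum_smul, smul_smul]
  exact Finset.sum_comm

theorem substM_one (f : P4) : substM 1 f = f := by
  refine AlgHom.congr_fun (algHom_ext fun i => ?_ : substM 1 = AlgHom.id kk P4) f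
  simp only [substM_X, Matrix.one_apply, ite_smul, one_smul, zero_smul, Finset.sum_ite_eq,
    Finset.mem_univ, if_true, AlgHom.id_apply]

theorem sqTotal_substM (f : P4) : sqTotal (substM M f) = substM M (sqTotal f) := by
  refine AlgHom.congr_fun (algHom_ext fun i => ?_ :
    sqTotal.comp (substM M) = (substM M).comp sqTotal) f
  have hMi : substM M (X i) ∈ homog 1 := by
    rw [substM_X]
    exact Submodule.sum_mem _ fun j _ => Submodule.smul_mem _ _ (isHomogeneous_X _ j)
  rw [AlgHom.comp_apply, AlgHom.comp_apply, sqTotal_linear hMi,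
    sqTotal_linear (isHomogeneous_X _ i), map_add, map_pow]

theorem substM_mem_homog (hf : f ∈ homog n) : substM M f ∈ homog n := by
  have h := IsHomogeneous.aeval hf (fun i => ∑ j, M i j • X j) (n := 1) fun i =>
    Submodule.sum_mem (homog 1) fun j _ => Submodule.smul_mem _ _ (isHomogeneous_X _ j)
  rwa [one_mul] at h

theorem homogeneousComponent_substM (n : ℕ) (f : P4) :
    homogeneousComponent n (substM M f) = substM M (homogeneousComponent n f) := by
  induction f using MvPolynomial.induction_on' with
  | monomial u c =>
    have hu : monomial u c ∈ homog u.degree := isHomogeneous_monomial c rfl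
    rw [homogeneousComponent_of_mem hu, homogeneousComponent_of_mem (substM_mem_homog M hu)]
    split_ifs
    · rfl
    · exact (map_zero _).symm
  | add f g hf hg => simp only [map_add, hf, hg]

theorem substM_mem_hitSub (hf : f ∈ hitSub n) : substM M f ∈ hitSub n := by
  refine (hitSub_le_iff (S := (hitSub n).comap (substM M).toLinearMap)).2 (fun d hd g hg => ?_) hf
  change substM M _ ∈ hitSub n
  rw [← homogeneousComponent_substM, ← sqTotal_substM]
  exact homogeneousComponent_sqTotal_mem_hitSub hd (substM_mem_homog M hg)

theorem substM_smodEq {g : P4} (h : f ≡ g [SMOD hitSub n]) :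
    substM M f ≡ substM M g [SMOD hitSub n] := by
  rw [SModEq.sub_mem] at h ⊢
  rw [← map_sub]
  exact substM_mem_hitSub M h

/-- The substitution `X a ↦ X a + X b`, the action of a transvection. -/
def shear (a b : Fin 4) : P4 →ₐ[kk] P4 := substM (Matrix.transvection a b 1)

theorem mem_invPre_glSet_iff : f ∈ invPre n glSet ↔
    f ∈ homog n ∧ ∀ a b, a ≠ b → shear a b f ≡ f [SMOD hitSub n] := by
  have hinv : f ∈ invPre n glSet ↔
      f ∈ homog n ∧ ∀ M ∈ glSet, substM M f ≡ f [SMOD hitSub n] := by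
    simp only [invPre, Submodule.mem_inf, Submodule.mem_iInf, Submodule.mem_comap,
      LinearMap.sub_apply, AlgHom.toLinearMap_apply, LinearMap.id_apply, SModEq.sub_mem]
  refine hinv.trans (and_congr_right fun _ => ⟨fun h a b hab => h _ ?_, fun h M hM => ?_⟩)
  · rw [glSet, Set.mem_ofPred_eq, Matrix.isUnit_iff_isUnit_det,
      Matrix.det_transvection_of_ne a b hab]
    exact isUnit_one
  refine Matrix.diagonal_transvection_induction_of_det_ne_zero
    (fun M => substM M f ≡ f [SMOD hitSub n]) M
    ((Matrix.isUnit_iff_isUnit_det _).1 hM).ne_zero (fun D hD => ?_) (fun t => ?_)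
    fun A B _ _ hA hB => ?_
  · rw [Matrix.det_diagonal, Finset.prod_ne_zero_iff] at hD
    have hD1 : Matrix.diagonal D = 1 := by
      rw [← Matrix.diagonal_one]
      exact congrArg _ (funext fun i =>
        (kk_eq_zero_or_eq_one _).resolve_left (hD i (Finset.mem_univ i)))
    rw [hD1, substM_one]
  · obtain hc | hc := eq_or_ne t.c 0
    · rw [Matrix.TransvectionStruct.toMatrix, hc, Matrix.transvection_zero, substM_one]
    · rw [Matrix.TransvectionStruct.toMatrix, (kk_eq_zero_or_eq_one _).resolve_left hc]
      exact h _ _ t.hij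
  · rw [substM_mul]
    exact (substM_smodEq B hA).trans hB

theorem Qmk_eq_zero_iff (hf : f ∈ homog n) : Qmk n f = 0 ↔ f ∈ hitSub n := by
  have h : (homog n).subtype (toHomog n f) = f := homogeneousComponent_eq_self hf
  rw [Qmk, LinearMap.comp_apply, Submodule.mkQ_apply, Submodule.Quotient.mk_eq_zero,
    Submodule.mem_comap, h]

theorem finrank_QInv_eq_zero {G : Set (Matrix (Fin 4) (Fin 4) kk)}
    (h : ∀ f ∈ invPre n G, f ∈ hitSub n) : Module.finrank kk (QInv n G) = 0 := by
  have hbot : QInv n G = ⊥ := by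
    rw [eq_bot_iff]
    rintro _ ⟨f, hf, rfl⟩
    exact (Qmk_eq_zero_iff hf.1).2 (h f hf)
  rw [hbot, finrank_bot]

theorem finrank_QInv_eq_one {G : Set (Matrix (Fin 4) (Fin 4) kk)} {f₀ : P4} (hf₀ : f₀ ∈ invPre n G)
    (hhit : f₀ ∉ hitSub n) (h : ∀ f ∈ invPre n G, f ∈ hitSub n ∨ f - f₀ ∈ hitSub n) :
    Module.finrank kk (QInv n G) = 1 := by
  have hspan : QInv n G = Submodule.span kk {Qmk n f₀} := by
    refine le_antisymm ?_ ((Submodule.span_singleton_le_iff_mem _ _).2 ⟨f₀, hf₀, rfl⟩)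
    rintro _ ⟨f, hf, rfl⟩
    obtain hf0 | hf1 := h f hf
    · rw [(Qmk_eq_zero_iff hf.1).2 hf0]
      exact zero_mem _
    · rw [← Qmk_eq_zero_iff (sub_mem hf.1 hf₀.1), map_sub, sub_eq_zero] at hf1
      rw [hf1]
      exact Submodule.mem_span_singleton_self _
  rw [hspan, finrank_span_singleton]
  rwa [Ne, Qmk_eq_zero_iff hf₀.1]

end Substitution

section Shear

variable {a b : Fin 4} {s : ℕ}

theorem shear_X (a b i : Fin 4) : shear a b (X i) = X i + if i = a then X b else 0 := by
  rw [shear, substM_X]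
  simp only [Matrix.transvection, Matrix.add_apply, Matrix.one_apply, Matrix.single_apply, add_smul,
    ite_smul, one_smul, zero_smul, Finset.sum_add_distrib, Finset.sum_ite_eq, Finset.mem_univ,
    if_true]
  congr 1
  by_cases h : i = a
  · simp [h]
  · simp [h, Ne.symm h]

theorem shear_varProd_of_notMem {u : Finset (Fin 4)} (ha : a ∉ u) (b : Fin 4) :
    shear a b (varProd u) = varProd u := by
  rw [varProd, map_prod]
  refine Finset.prod_congr rfl fun i hi => ?_
  rw [shear_X, if_neg, add_zero]
  rintro rfl
  exact ha hi

theorem shear_varProd_of_mem {u : Finset (Fin 4)} (ha : a ∈ u) (b : Fin 4) :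
    shear a b (varProd u) = varProd u + X b * varProd (u.erase a) := by
  rw [← Finset.insert_erase ha, varProd_insert (Finset.notMem_erase a u), map_mul, shear_X,
    if_pos rfl, shear_varProd_of_notMem (Finset.notMem_erase a u), Finset.erase_insert_eq_erase,
    Finset.erase_idem, add_mul]

theorem shear_shear (hab : a ≠ b) (f : P4) : shear a b (shear a b f) = f := by
  rw [shear, ← substM_mul, Matrix.transvection_mul_transvection_same a b hab,
    CharTwo.add_self_eq_zero, Matrix.transvection_zero, substM_one]

theorem shear_kamekoLift_smodEq (hab : a ≠ b) (i : Fin 4) {g : P4}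
    (hg : g ∈ homog (kamekoDegree s)) :
    shear a b (kamekoLift i g) ≡
      kamekoLift i (shear a b g) + (if i = b then kamekoLift a (shear a b g) else 0)
      [SMOD hitSub (kamekoDegree (s + 1))] := by
  have hg' : shear a b g ∈ homog (kamekoDegree s) := substM_mem_homog _ hg
  rw [kamekoLift_apply i g, map_mul, map_pow]
  obtain rfl | hia := eq_or_ne i a
  · rw [shear_varProd_of_notMem (by simp), if_neg hab, add_zero, kamekoLift_apply]
  rw [shear_varProd_of_mem (by simpa using hia.symm), add_mul, ← kamekoLift_apply]
  refine SModEq.add rfl ?_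
  split_ifs with hib
  · have hcompl : ∀ a b : Fin 4, a ≠ b →
        insert b (({b}ᶜ : Finset (Fin 4)).erase a) = {a}ᶜ := by decide
    rw [hib, ← varProd_insert (by simp), hcompl a b hab, kamekoLift_apply]
  · have hcompl : ∀ a b i : Fin 4, a ≠ b → i ≠ a → i ≠ b → ∃ k, b ≠ k ∧
        ({i}ᶜ : Finset (Fin 4)).erase a = {b, k} := by decide
    obtain ⟨k, hbk, hk⟩ := hcompl a b i hab hia hib
    have hhit : X k * (X b * shear a b g) ^ 2 ∈ hitSub (kamekoDegree (s + 1)) :=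
      X_mul_sq_mem_hitSub_kamekoDegree k
        (add_comm 1 (kamekoDegree s) ▸ IsHomogeneous.mul (isHomogeneous_X _ b) hg')
    have hterm : X b * varProd {b, k} * shear a b g ^ 2 = X k * (X b * shear a b g) ^ 2 := by
      rw [varProd, Finset.prod_pair hbk]
      ring
    rw [hk, hterm]
    exact SModEq.zero.2 hhit

end Shear

section FlagShear

open Matrix

variable {a b : Fin 4} {s : ℕ} {f : P4}

theorem aeval_substM (p : Fin 4 → kk) (M : Matrix (Fin 4) (Fin 4) kk) (f : P4) :
    aeval p (substM M f) = aeval (M *ᵥ p) f := by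
  refine AlgHom.congr_fun (algHom_ext fun i => ?_ :
    (aeval p).comp (substM M) = aeval (M *ᵥ p)) f
  simp only [AlgHom.comp_apply, substM_X, map_sum, map_smul, aeval_X, smul_eq_mul, mulVec,
    dotProduct]

theorem vecMul_transvection_one_apply (l : Fin 4 → kk) (a b i : Fin 4) :
    (l ᵥ* transvection a b 1) i = l i + if i = b then l a else 0 := by
  rw [transvection, vecMul_add, vecMul_one, Pi.add_apply, ← mulVec_transpose (single a b 1),
    transpose_single, single_mulVec_eq, one_mul, Pi.smul_apply, smul_eq_mul, Pi.single_apply,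
    mul_ite, mul_one, mul_zero]

theorem transvection_one_mul_self (hab : a ≠ b) :
    transvection a b (1 : kk) * transvection a b 1 = 1 := by
  rw [transvection_mul_transvection_same a b hab, CharTwo.add_self_eq_zero, transvection_zero]

theorem vecMul_dotProduct_mulVec_transvection (hab : a ≠ b) (l p : Fin 4 → kk) :
    (l ᵥ* transvection a b 1) ⬝ᵥ (transvection a b 1 *ᵥ p) = l ⬝ᵥ p := by
  rw [← dotProduct_mulVec, mulVec_mulVec, transvection_one_mul_self hab, one_mulVec]

theorem flagFunctional_shear_kamekoWord (hab : a ≠ b) {l p : Fin 4 → kk} (hlp : l ⬝ᵥ p = 0)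
    (w : List (Fin 4)) {q : P4} (hq : q ∈ homog 3) :
    flagFunctional l p w.length (shear a b (kamekoWord w q)) =
      flagFunctional (l ᵥ* transvection a b 1) (transvection a b 1 *ᵥ p) w.length
        (kamekoWord w q) := by
  induction w with
  | nil => exact aeval_substM p _ q
  | cons i w ih =>
    have h := hitSub_le_ker_flagFunctional hlp (w.length + 1)
      (SModEq.sub_mem.1 (shear_kamekoLift_smodEq hab i (kamekoWord_mem_homog w hq)))
    rw [LinearMap.mem_ker, map_sub, sub_eq_zero, map_add,
      apply_ite (flagFunctional l p (w.length + 1)), map_zero, flagFunctional_kamekoLift,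
      flagFunctional_kamekoLift, ih, ← ite_zero_mul, ← add_mul, ← vecMul_transvection_one_apply,
      ← flagFunctional_kamekoLift] at h
    exact h

theorem flagFunctional_shear (hab : a ≠ b) {l p : Fin 4 → kk} (hlp : l ⬝ᵥ p = 0)
    (hf : f ∈ homog (kamekoDegree s)) :
    flagFunctional l p s (shear a b f) =
      flagFunctional (l ᵥ* transvection a b 1) (transvection a b 1 *ᵥ p) s f := by
  obtain ⟨q, hq, h, hh, rfl⟩ := Submodule.mem_sup.1 (homog_le_kamekoWordSpan_sup_hitSub s hf)
  have hh1 := hitSub_le_ker_flagFunctional hlp s (substM_mem_hitSub (transvection a b 1) hh)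
  have hh2 := hitSub_le_ker_flagFunctional
    ((vecMul_dotProduct_mulVec_transvection hab l p).trans hlp) s hh
  rw [map_add, map_add, map_add, show flagFunctional l p s (shear a b h) = 0 from hh1,
    LinearMap.mem_ker.1 hh2, add_left_inj]
  clear hf
  induction hq using Submodule.span_induction with
  | mem q hq =>
    obtain ⟨w, J, rfl, hJ, rfl⟩ := hq
    exact flagFunctional_shear_kamekoWord hab hlp w (hJ ▸ prod_X_mem_homog J)
  | zero => simp only [map_zero]
  | add _ _ _ _ hq hr => simp only [map_add, hq, hr]
  | smul c _ _ hq => simp only [map_smul, hq]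

/-- The action on flags of the transvection underlying `shear a b`. -/
def flagShear (hab : a ≠ b) (x : PointPlaneFlag) : PointPlaneFlag :=
  ⟨(x.1.1 ᵥ* transvection a b 1, transvection a b 1 *ᵥ x.1.2),
    fun h : x.1.1 ᵥ* transvection a b 1 = 0 => x.2.1 <| by
      rw [← vecMul_one x.1.1, ← transvection_one_mul_self hab, ← vecMul_vecMul, h, zero_vecMul],
    fun h : transvection a b 1 *ᵥ x.1.2 = 0 => x.2.2.1 <| by
      rw [← one_mulVec x.1.2, ← transvection_one_mul_self hab, ← mulVec_mulVec, h, mulVec_zero],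
    (vecMul_dotProduct_mulVec_transvection hab _ _).trans x.2.2.2⟩

theorem flagEval_shear (hab : a ≠ b) (hf : f ∈ homog (kamekoDegree s)) :
    flagEval s (shear a b f) = flagEval s f ∘ flagShear hab :=
  funext fun x => flagFunctional_shear hab x.2.2.2 hf

/-- Modulo shears every flag can be moved to the one minimizing this weight, in which the point is
the first basis vector and the plane is the kernel of the last coordinate. -/
def flagWeight (x : PointPlaneFlag) : ℕ :=
  8 * (4 * (1 + x.1.2 0).val + (x.1.2 1).val + (x.1.2 2).val + (x.1.2 3).val) +
    (4 * (1 + x.1.1 3).val + (x.1.1 0).val + (x.1.1 1).val + (x.1.1 2).val)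

theorem exists_flagWeight_flagShear_lt {x : PointPlaneFlag} (hx : flagWeight x ≠ 0) :
    ∃ a b, ∃ hab : a ≠ b, flagWeight (flagShear hab x) < flagWeight x := by
  have h : ∀ l p : Fin 4 → kk, ∀ h : l ≠ 0 ∧ p ≠ 0 ∧ l ⬝ᵥ p = 0, flagWeight ⟨(l, p), h⟩ ≠ 0 →
      ∃ a b, ∃ hab : a ≠ b, flagWeight (flagShear hab ⟨(l, p), h⟩) < flagWeight ⟨(l, p), h⟩ := by
    decide +kernel
  exact h _ _ x.2 hx

theorem eq_of_flagWeight_eq_zero {x : PointPlaneFlag} (hx : flagWeight x = 0) :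
    x.1 = (Pi.single 3 1, Pi.single 0 1) := by
  have h : ∀ l p : Fin 4 → kk, ∀ h : l ≠ 0 ∧ p ≠ 0 ∧ l ⬝ᵥ p = 0, flagWeight ⟨(l, p), h⟩ = 0 →
      (l, p) = (Pi.single 3 1, Pi.single 0 1) := by
    decide +kernel
  exact h _ _ x.2 hx

theorem exists_eq_const_of_comp_flagShear {φ : PointPlaneFlag → kk}
    (h : ∀ a b, ∀ hab : a ≠ b, φ ∘ flagShear hab = φ) : ∃ c, φ = Function.const _ c := by
  let x₀ : PointPlaneFlag := ⟨(Pi.single 3 1, Pi.single 0 1), by decide⟩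
  refine ⟨φ x₀, funext fun x => ?_⟩
  induction hx : flagWeight x using Nat.strong_induction_on generalizing x with
  | _ n ih =>
  by_cases hn : n = 0
  · exact congrArg φ (Subtype.ext (eq_of_flagWeight_eq_zero (hx.trans hn)))
  · obtain ⟨a, b, hab, hlt⟩ := exists_flagWeight_flagShear_lt (hx.trans_ne hn)
    rw [← congrFun (h a b hab) x]
    exact ih _ (hx ▸ hlt) _ rfl

end FlagShear

section Invariants

variable {s : ℕ} {f : P4}

theorem exists_flagEval_eq_const_of_mem_invPre (hf : f ∈ invPre (kamekoDegree s) glSet) :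
    ∃ c, flagEval s f = Function.const _ c := by
  obtain ⟨hf, hshear⟩ := mem_invPre_glSet_iff.1 hf
  refine exists_eq_const_of_comp_flagShear fun a b hab => ?_
  rw [← flagEval_shear hab hf, ← sub_eq_zero, ← map_sub]
  exact hitSub_le_ker_flagEval s (SModEq.sub_mem.1 (hshear a b hab))

theorem finrank_QInv_kamekoDegree_of_three_le (hs : 3 ≤ s) :
    Module.finrank kk (QInv (kamekoDegree s) glSet) = 1 := by
  obtain ⟨f₀, hf₀, hone⟩ := exists_flagEval_eq hs 1
  refine finrank_QInv_eq_one (f₀ := f₀) (mem_invPre_glSet_iff.2 ⟨hf₀, fun a b hab => ?_⟩)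
    (fun hhit => ?_) fun f hf => ?_
  · rw [SModEq.sub_mem]
    refine mem_hitSub_of_flagEval_eq_zero hs (sub_mem (substM_mem_homog _ hf₀) hf₀) ?_
    rw [map_sub, flagEval_shear hab hf₀, hone]
    exact sub_self _
  · have : Nonempty PointPlaneFlag := ⟨⟨(Pi.single 3 1, Pi.single 0 1), by decide⟩⟩
    exact one_ne_zero (hone.symm.trans (hitSub_le_ker_flagEval s hhit))
  · obtain ⟨c, hc⟩ := exists_flagEval_eq_const_of_mem_invPre hf
    obtain rfl | rfl := kk_eq_zero_or_eq_one c
    · exact Or.inl (mem_hitSub_of_flagEval_eq_zero hs hf.1 hc)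
    · refine Or.inr (mem_hitSub_of_flagEval_eq_zero hs (sub_mem hf.1 hf₀) ?_)
      rw [map_sub, hone, hc]
      exact sub_self _

theorem sum_flagMonomial_eq_zero {S : Finset (Fin 4)} (hS0 : S.Nonempty) (hS : S.card ≤ 2)
    (T : Finset (Fin 4)) : ∑ x, flagMonomial S T x = 0 := by
  decide +kernel +revert

theorem flagEval_eq_zero_of_mem_invPre (hs0 : s ≠ 0) (hs : s ≤ 2)
    (hf : f ∈ invPre (kamekoDegree s) glSet) : flagEval s f = 0 := by
  let σ : (PointPlaneFlag → kk) →ₗ[kk] kk := ∑ x, LinearMap.proj x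
  have hσ (φ : PointPlaneFlag → kk) : σ φ = ∑ x, φ x := by
    simp only [σ, LinearMap.sum_apply, LinearMap.proj_apply]
  have hsum : homog (kamekoDegree s) ≤ LinearMap.ker (σ ∘ₗ flagEval s) := by
    refine (homog_le_span_kamekoMonomial hs0).trans (sup_le (Submodule.span_le.2 ?_)
      ((hitSub_le_ker_flagEval s).trans (LinearMap.ker_le_ker_comp _ _)))
    rintro _ ⟨S, T, hS0, hS, hT0, -, rfl⟩
    change σ (flagEval s _) = 0
    rw [flagEval_kamekoMonomial hS0 hS hT0, hσ, sum_flagMonomial_eq_zero hS0 (hS.trans hs)]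
  obtain ⟨c, hc⟩ := exists_flagEval_eq_const_of_mem_invPre hf
  have h : σ (flagEval s f) = 0 := hsum hf.1
  have hodd : (105 : kk) = 1 := rfl
  simp only [hc, hσ, Function.const_apply, Finset.sum_const, Finset.card_univ,
    card_pointPlaneFlag, nsmul_eq_mul, Nat.cast_ofNat, hodd, one_mul] at h
  rw [hc, h]
  rfl

end Invariants

section DegreeNine

/-- The polynomial of degree 9 spanning the kernel of `flagEval 1` modulo hit polynomials. -/
def flagKernelGenerator : P4 := flagRelation (kamekoMonomial 1) ∅ ∅

theorem flagKernelGenerator_mem_homog : flagKernelGenerator ∈ homog (kamekoDegree 1) :=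
  flagRelation_kamekoMonomial_mem_homog zero_lt_one zero_le

theorem flagFunctional_flagKernelGenerator (l p : Fin 4 → kk) :
    flagFunctional l p 1 flagKernelGenerator = l ⬝ᵥ p := by
  rw [flagKernelGenerator, flagRelation, map_sum]
  refine Finset.sum_congr rfl fun i _ => ?_
  rw [flagFunctional_kamekoMonomial l p (Finset.insert_nonempty i ∅) (Finset.card_singleton i).le
    (Finset.insert_nonempty i ∅)]
  simp only [insert_empty_eq, Finset.prod_singleton]

theorem hitSub_le_ker_sum_flagFunctional {l : (Fin 4 → kk) → Fin 4 → kk}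
    (hl : ∀ p, p ≠ 0 → l p ⬝ᵥ p = 1) :
    hitSub (kamekoDegree 1) ≤ LinearMap.ker (∑ p, flagFunctional (l p) p 1) := by
  let φ (i : Fin 4) : P4 →ₗ[kk] kk := ∑ p, l p i • (aeval p).toLinearMap
  have hφ (i : Fin 4) : hitSub 3 ≤ LinearMap.ker (φ i) := fun f hf => by
    have h (p : Fin 4 → kk) : aeval p f = (0 : kk) := hitSub_three_le_ker_aeval p hf
    simp only [φ, LinearMap.mem_ker, LinearMap.sum_apply, LinearMap.smul_apply,
      AlgHom.toLinearMap_apply, h, smul_zero, Finset.sum_const_zero]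
  have hX (f : P4) (hf : f ∈ homog 2) : ∑ i, φ i (X i * f) = 0 := by
    have hp (p : Fin 4 → kk) : (l p ⬝ᵥ p) * aeval p f = eval p f := by
      obtain rfl | hp := eq_or_ne p 0
      · rw [dotProduct_zero, zero_mul, eval_zero, constantCoeff_eq]
        exact (IsHomogeneous.coeff_eq_zero hf (by decide)).symm
      · rw [hl p hp, one_mul, aeval_eq_eval]
    have hdeg : f.totalDegree < (Fintype.card kk - 1) * Fintype.card (Fin 4) :=
      hf.totalDegree_le.trans_lt (by decide)
    rw [← sum_eval_eq_zero f hdeg]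
    simp only [φ, LinearMap.sum_apply, LinearMap.smul_apply, AlgHom.toLinearMap_apply, ← hp,
      map_mul, aeval_X, dotProduct, Finset.sum_mul, smul_eq_mul, mul_assoc]
    exact Finset.sum_comm
  refine (hitSub_le_ker_sum_comp_sqrtCoeff rfl hφ hX).trans_eq (congrArg _ ?_)
  refine LinearMap.ext fun f => ?_
  simp only [φ, LinearMap.sum_apply, LinearMap.comp_apply, LinearMap.smul_apply, smul_eq_mul,
    AlgHom.toLinearMap_apply, flagFunctional_succ, flagFunctional_zero]
  exact Finset.sum_comm

theorem flagKernelGenerator_notMem_hitSub : flagKernelGenerator ∉ hitSub (kamekoDegree 1) := by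
  have h : ∀ p : Fin 4 → kk, ∃ l : Fin 4 → kk, p ≠ 0 → l ⬝ᵥ p = 1 := by decide +kernel
  choose l hl using h
  intro hhit
  have hlp (p : Fin 4 → kk) : l p ⬝ᵥ p = if p = 0 then 0 else 1 := by
    split_ifs with hp
    · rw [hp, dotProduct_zero]
    · exact hl p hp
  have h := hitSub_le_ker_sum_flagFunctional hl hhit
  simp only [LinearMap.mem_ker, LinearMap.sum_apply, flagFunctional_flagKernelGenerator, hlp] at h
  exact absurd h (by decide +kernel)

theorem mem_hitSub_or_sub_mem_hitSub_of_flagEval_one_eq_zero {f : P4}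
    (hf : f ∈ homog (kamekoDegree 1)) (h : flagEval 1 f = 0) :
    f ∈ hitSub (kamekoDegree 1) ∨ f - flagKernelGenerator ∈ hitSub (kamekoDegree 1) := by
  have hspan : f ∈ hitSub (kamekoDegree 1) ⊔ Submodule.span kk {flagKernelGenerator} := by
    refine (sup_le_sup_left (Submodule.span_mono ?_) _ :
      hitSub _ ⊔ Submodule.span kk _ ≤ hitSub _ ⊔ Submodule.span kk _)
      (mem_hitSub_sup_span_of_flagEval_eq_zero one_ne_zero hf h)
    rintro _ ⟨S, hS, rfl⟩
    rw [Finset.card_eq_zero.1 (Nat.lt_one_iff.1 hS)]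
    rfl
  obtain ⟨g, hg, q, hq, rfl⟩ := Submodule.mem_sup.1 hspan
  obtain ⟨c, rfl⟩ := Submodule.mem_span_singleton.1 hq
  obtain rfl | rfl := kk_eq_zero_or_eq_one c
  · exact Or.inl (by rwa [zero_smul, add_zero])
  · exact Or.inr (by rwa [one_smul, add_sub_cancel_right])

theorem shear_flagKernelGenerator_smodEq {a b : Fin 4} (hab : a ≠ b) :
    shear a b flagKernelGenerator ≡ flagKernelGenerator [SMOD hitSub (kamekoDegree 1)] := by
  have hzero : flagEval 1 flagKernelGenerator = 0 :=
    flagEval_flagRelation_kamekoMonomial zero_lt_one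
  have hmem := flagKernelGenerator_mem_homog
  rw [SModEq.sub_mem]
  refine (mem_hitSub_or_sub_mem_hitSub_of_flagEval_one_eq_zero
    (substM_mem_homog _ hmem : shear a b flagKernelGenerator ∈ homog _) ?_).resolve_left fun h =>
    flagKernelGenerator_notMem_hitSub ?_
  · exact (flagEval_shear hab hmem).trans (congrArg (· ∘ flagShear hab) hzero)
  · rw [← shear_shear hab flagKernelGenerator]
    exact substM_mem_hitSub _ h

theorem finrank_QInv_kamekoDegree_one :
    Module.finrank kk (QInv (kamekoDegree 1) glSet) = 1 :=
  finrank_QInv_eq_one (mem_invPre_glSet_iff.2 ⟨flagKernelGenerator_mem_homog,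
      fun _ _ hab => shear_flagKernelGenerator_smodEq hab⟩)
    flagKernelGenerator_notMem_hitSub fun _ hf =>
      mem_hitSub_or_sub_mem_hitSub_of_flagEval_one_eq_zero hf.1
        (flagEval_eq_zero_of_mem_invPre one_ne_zero one_le_two hf)

end DegreeNine

section DegreeTwentyOne

variable {a b : Fin 4} {s : ℕ} {f : P4}

theorem kamekoLift_kamekoMonomial_smodEq (a : Fin 4) {S T : Finset (Fin 4)} (hS0 : S.Nonempty)
    (hS : S.card ≤ s) (hT0 : T.Nonempty) (hT : T.card ≤ 3) :
    kamekoLift a (kamekoMonomial s S T) ≡ kamekoMonomial (s + 1) (insert a S) T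
      [SMOD hitSub (kamekoDegree (s + 1))] := by
  rw [kamekoMonomial, ← kamekoWord_cons]
  refine kamekoWord_smodEq_kamekoMonomial ?_ (length_wordOn hT) ?_ (toFinset_wordOn hT0)
    (Finset.insert_nonempty a S)
  · rw [List.length_cons, length_wordOn hS]
  · rw [List.toFinset_cons, toFinset_wordOn hS0]

theorem kamekoLift_flagKernelGenerator_smodEq (a : Fin 4) :
    kamekoLift a flagKernelGenerator ≡ flagRelation (kamekoMonomial 2) {a} ∅
      [SMOD hitSub (kamekoDegree 2)] := by
  rw [flagKernelGenerator, flagRelation, flagRelation, map_sum]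
  refine SModEq.sum fun i _ => ?_
  rw [Finset.pair_comm i a]
  exact kamekoLift_kamekoMonomial_smodEq a (Finset.insert_nonempty i ∅)
    (Finset.card_singleton i).le (Finset.insert_nonempty i ∅)
    ((Finset.card_singleton i).le.trans (by decide))

theorem exists_smodEq_sum_smul_kamekoLift_flagKernelGenerator (hf : f ∈ homog (kamekoDegree 2))
    (h : flagEval 2 f = 0) : ∃ c : Fin 4 → kk,
      f ≡ ∑ i, c i • kamekoLift i flagKernelGenerator [SMOD hitSub (kamekoDegree 2)] := by
  have hspan : f ∈ hitSub (kamekoDegree 2) ⊔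
      Submodule.span kk (Set.range fun i => kamekoLift i flagKernelGenerator) := by
    refine (sup_le le_sup_left (Submodule.span_le.2 ?_) :
      hitSub _ ⊔ Submodule.span kk _ ≤ hitSub _ ⊔ Submodule.span kk _)
      (mem_hitSub_sup_span_of_flagEval_eq_zero two_ne_zero hf h)
    rintro _ ⟨S, hS, rfl⟩
    obtain ⟨a, ha⟩ := Finset.card_le_one_iff_subset_singleton.1 (Nat.le_of_lt_succ hS)
    obtain rfl | rfl := Finset.subset_singleton_iff.1 ha
    · exact Submodule.mem_sup_left
        (flagRelation_kamekoMonomial_empty_mem_hitSub_of_card_add_two_le le_rfl)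
    · refine SetLike.mem_coe.2 (Submodule.mem_sup.2 ⟨_, SModEq.sub_mem.1
        (kamekoLift_flagKernelGenerator_smodEq a).symm, _,
        Submodule.subset_span ⟨a, rfl⟩, sub_add_cancel _ _⟩)
  obtain ⟨g, hg, q, hq, rfl⟩ := Submodule.mem_sup.1 hspan
  obtain ⟨c, rfl⟩ := (Submodule.mem_span_range_iff_exists_fun kk).1 hq
  refine ⟨c, ?_⟩
  rwa [SModEq.sub_mem, add_sub_cancel_right]

theorem shear_kamekoLift_flagKernelGenerator_smodEq (hab : a ≠ b) (i : Fin 4) :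
    shear a b (kamekoLift i flagKernelGenerator) ≡ kamekoLift i flagKernelGenerator +
      (if i = b then kamekoLift a flagKernelGenerator else 0)
      [SMOD hitSub (kamekoDegree 2)] := by
  have hZ (i : Fin 4) := kamekoLift_smodEq i (shear_flagKernelGenerator_smodEq hab)
  refine (shear_kamekoLift_smodEq hab i flagKernelGenerator_mem_homog).trans ((hZ i).add ?_)
  split_ifs
  · exact hZ a
  · rfl

theorem smul_kamekoLift_flagKernelGenerator_mem_hitSub {c : Fin 4 → kk}
    (hf : f ≡ ∑ i, c i • kamekoLift i flagKernelGenerator [SMOD hitSub (kamekoDegree 2)])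
    (hab : a ≠ b) (h : shear a b f ≡ f [SMOD hitSub (kamekoDegree 2)]) :
    c b • kamekoLift a flagKernelGenerator ∈ hitSub (kamekoDegree 2) := by
  have hshear : shear a b f ≡ ∑ i, c i • kamekoLift i flagKernelGenerator +
      c b • kamekoLift a flagKernelGenerator [SMOD hitSub (kamekoDegree 2)] := by
    have hsum : ∑ i, c i • kamekoLift i flagKernelGenerator +
        c b • kamekoLift a flagKernelGenerator = ∑ i, c i • (kamekoLift i flagKernelGenerator +
          if i = b then kamekoLift a flagKernelGenerator else 0) := by
      simp only [smul_add, smul_ite, smul_zero, Finset.sum_add_distrib, Finset.sum_ite_eq',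
        Finset.mem_univ, if_true]
    rw [hsum]
    refine (substM_smodEq (Matrix.transvection a b 1) hf).trans ?_
    simp only [map_sum, map_smul]
    exact SModEq.sum fun i _ => (shear_kamekoLift_flagKernelGenerator_smodEq hab i).smul (c i)
  have h' := SModEq.sub_mem.1 (hshear.symm.trans (h.trans hf))
  rwa [add_sub_cancel_left] at h'

theorem kamekoLift_flagKernelGenerator_mem_hitSub (hab : a ≠ b)
    (h : kamekoLift b flagKernelGenerator ∈ hitSub (kamekoDegree 2)) :
    kamekoLift a flagKernelGenerator ∈ hitSub (kamekoDegree 2) := by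
  have hb := SModEq.zero.1 ((shear_kamekoLift_flagKernelGenerator_smodEq hab b).symm.trans
    (SModEq.zero.2 (substM_mem_hitSub _ h)))
  rw [if_pos rfl] at hb
  exact (Submodule.add_mem_iff_right _ h).1 hb

theorem finrank_QInv_kamekoDegree_two :
    Module.finrank kk (QInv (kamekoDegree 2) glSet) = 0 := by
  refine finrank_QInv_eq_zero fun f hf => ?_
  obtain ⟨c, hc⟩ := exists_smodEq_sum_smul_kamekoLift_flagKernelGenerator hf.1
    (flagEval_eq_zero_of_mem_invPre two_ne_zero le_rfl hf)
  suffices h : ∀ i, c i • kamekoLift i flagKernelGenerator ∈ hitSub (kamekoDegree 2) from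
    SModEq.zero.1 (hc.trans (SModEq.zero.2 (Submodule.sum_mem _ fun i _ => h i)))
  intro b
  obtain hcb | hcb := kk_eq_zero_or_eq_one (c b)
  · rw [hcb, zero_smul]
    exact zero_mem _
  obtain ⟨a, hab⟩ := exists_ne b
  have ha := smul_kamekoLift_flagKernelGenerator_mem_hitSub hc hab
    ((mem_invPre_glSet_iff.1 hf).2 a b hab)
  rw [hcb, one_smul] at ha ⊢
  exact kamekoLift_flagKernelGenerator_mem_hitSub hab.symm ha

end DegreeTwentyOne

/-- In degree `n = 3(2^s-1) + 3·2^s = 6·2^s - 3` (`s ≥ 1`), the space of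
`GL_4(F_2)`-invariants of `Q_n` (equivalently, the domain of Singer's fourth transfer)
has dimension `0` if `s = 2` and dimension `1` if `s ≠ 2`. -/
theorem statement_0 (s n : ℕ) (hs : 1 ≤ s)
    (hn : n = 3 * (2 ^ s - 1) + 3 * 2 ^ s) :
    (s = 2 → Module.finrank kk ↥(QInv n glSet) = 0) ∧
    (s ≠ 2 → Module.finrank kk ↥(QInv n glSet) = 1) := by
  rw [← kamekoDegree_eq] at hn
  subst hn
  refine ⟨?_, fun h2 => ?_⟩
  · rintro rfl
    exact finrank_QInv_kamekoDegree_two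
  · obtain rfl | h3 : s = 1 ∨ 3 ≤ s := by omega
    · exact finrank_QInv_kamekoDegree_one
    · exact finrank_QInv_kamekoDegree_of_three_le h3

end
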